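/- arXiv:2207.09972 — 2 statements merged into one kernel-verified Lean document; each statement's English description precedes it below -/
import Mathlib

section
/- There is a constant C > 0 such that for every n ≥ 2 there exists a nonempty set S of triangulations of the convex (n+2)-gon with 2|S| ≤ |V(K_n)| for which the number of edges of the associahedron graph K_n with exactly one endpoint in S is at most C·|S|/√n. In other words, the edge expansion of K_n is O(1/√n). -/
open Finset

/-- `x` lies strictly between `a` and `b` in cyclic (counterclockwise) order
on the vertices `0, 1, …, m-1` of a convex `m`-gon. -/
def CycBtw {m : ℕ} (a b x : Fin m) : Prop :=
  0 < (x - a).val ∧ (x - a).val < (b - a).val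

/-- `a` and `b` are adjacent (cyclically consecutive) vertices of the convex `m`-gon. -/
def PolyAdj {m : ℕ} (a b : Fin m) : Prop :=
  (b - a).val = 1 ∨ (a - b).val = 1

/-- `e` is a side of the convex `m`-gon. -/
def IsSide {m : ℕ} (e : Sym2 (Fin m)) : Prop :=
  ∃ a b : Fin m, e = s(a, b) ∧ PolyAdj a b

/-- `e` is a diagonal of the convex `m`-gon: a pair of distinct non-adjacent vertices. -/
def IsDiagonal {m : ℕ} (e : Sym2 (Fin m)) : Prop :=
  ¬ e.IsDiag ∧ ∀ a b : Fin m, e = s(a, b) → ¬ PolyAdj a b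

/-- Two chords cross iff exactly one endpoint of one lies strictly between the
endpoints of the other (for every representation of the endpoints). -/
def Crosses {m : ℕ} (e f : Sym2 (Fin m)) : Prop :=
  ∀ a b : Fin m, e = s(a, b) →
    ∃ c d : Fin m, f = s(c, d) ∧ Xor' (CycBtw a b c) (CycBtw a b d)

/-- A triangulation of the convex `(n+2)`-gon: a maximal set of pairwise
non-crossing diagonals. -/
def IsTriangulation (n : ℕ) (t : Finset (Sym2 (Fin (n + 2)))) : Prop :=
  (∀ e ∈ t, IsDiagonal e) ∧
  (∀ e ∈ t, ∀ f ∈ t, ¬ Crosses e f) ∧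
  (∀ e, IsDiagonal e → (∀ f ∈ t, ¬ Crosses e f) → e ∈ t)

/-- The type of triangulations of the convex `(n+2)`-gon. -/
def Triangulation (n : ℕ) : Type :=
  {t : Finset (Sym2 (Fin (n + 2))) // IsTriangulation n t}

instance (n : ℕ) : DecidableEq (Triangulation n) := fun a b =>
  decidable_of_iff (a.val = b.val) Subtype.ext_iff.symm

noncomputable instance (n : ℕ) : Fintype (Triangulation n) := by
  classical exact Subtype.fintype _

/-- The associahedron graph `K_n`: vertices are the triangulations of the convex
`(n+2)`-gon, with an edge between two triangulations iff they differ in exactly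
one diagonal (a flip). -/
def assocGraph (n : ℕ) : SimpleGraph (Triangulation n) where
  Adj s t := (s.val \ t.val).card = 1 ∧ (t.val \ s.val).card = 1
  symm := ⟨fun s t h => ⟨h.2, h.1⟩⟩
  loopless := ⟨fun s h => by simp at h⟩

/-- The set of edges of `G` with exactly one endpoint in `S`. -/
def edgeBoundary {V : Type*} (G : SimpleGraph V) (S : Set V) : Set (Sym2 V) :=
  {e | e ∈ G.edgeSet ∧ ∃ u v : V, e = s(u, v) ∧ u ∈ S ∧ v ∉ S}

/-!
Cut the vertices into four consecutive blocks of about `n / 4` vertices, and let `S` consist of the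
triangulations having a chord from the first block to the third. A flip leaving `S` must replace a
chord from the first block to the third by one from the second to the fourth, hence exchanges the
diagonals of a quadrilateral with one vertex in each block, and it is determined by this
quadrilateral together with the triangulation in `S`. The triangulations containing a given
quadrilateral are counted by a product of four Catalan numbers, which grow like `4 ^ k / k ^ (3/2)`;
summing over the quadrilaterals shows that the boundary of `S` has `O(4 ^ n / n ^ 2)` edges. On the
other hand, a triangle with vertices in the first, third and fourth blocks forces a triangulation
into `S`, one with vertices in the first, second and fourth blocks forces it out of `S`, and
a triangulation contains at most one triangle of either kind. So `S` and its complement both have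
order `4 ^ n / n ^ (3/2)` elements.
-/

namespace Associahedron

section Splitting

variable {α : Type*} [LinearOrder α] {V W₁ W₂ : Finset α} {T T₁ T₂ : Finset (α × α)}
  {c e f : α × α} {a b x : α}

/-- Two chords, each given as a pair `(a, b)` with `a < b`, cross: their endpoints alternate.
This is `Crosses` for polygons whose vertices are listed in increasing order. -/
def Interlace (e f : α × α) : Prop :=
  (e.1 < f.1 ∧ f.1 < e.2 ∧ e.2 < f.2) ∨ (f.1 < e.1 ∧ e.1 < f.2 ∧ f.2 < e.2)

lemma Interlace.symm (h : Interlace e f) : Interlace f e := Or.symm h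

/-- The chords of the polygon with vertex set `V`, written in increasing order. The sides of the
polygon count as chords. -/
def chords (V : Finset α) : Finset (α × α) := {e ∈ V ×ˢ V | e.1 < e.2}

lemma mem_chords : e ∈ chords V ↔ e.1 ∈ V ∧ e.2 ∈ V ∧ e.1 < e.2 := by
  simp [chords, and_assoc]

/-- `T` triangulates the convex polygon with vertex set `V`. In contrast to `IsTriangulation`, the
sides of the polygon belong to `T`, so that gluing two polygons along a chord is a union. -/
structure IsChordTriangulation (V : Finset α) (T : Finset (α × α)) : Prop where
  subset_chords : T ⊆ chords V
  not_interlace : ∀ ⦃e⦄, e ∈ T → ∀ ⦃f⦄, f ∈ T → ¬ Interlace e f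
  mem_of_not_interlace : ∀ ⦃e⦄, e ∈ chords V → (∀ f ∈ T, ¬ Interlace e f) → e ∈ T

open Classical in
/-- The triangulations of the polygon with vertex set `V` that use all chords in `A`. -/
noncomputable def triangulationsContaining (V : Finset α) (A : Finset (α × α)) :
    Finset (Finset (α × α)) :=
  {T ∈ (chords V).powerset | IsChordTriangulation V T ∧ A ⊆ T}

lemma mem_triangulationsContaining {A : Finset (α × α)} :
    T ∈ triangulationsContaining V A ↔ IsChordTriangulation V T ∧ A ⊆ T := by
  simp only [triangulationsContaining, mem_filter, mem_powerset, and_iff_right_iff_imp]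
  exact fun h => h.1.subset_chords

/-- The chord `c` cuts the polygon with vertex set `V` into those with vertex sets `W₁` and `W₂`.
The two pieces play symmetric roles. -/
structure IsSplit (V W₁ W₂ : Finset α) (c : α × α) : Prop where
  mem_left : c ∈ chords W₁
  mem_right : c ∈ chords W₂
  left_subset : chords W₁ ⊆ chords V
  right_subset : chords W₂ ⊆ chords V
  not_interlace : ∀ ⦃e⦄, e ∈ chords W₁ → ∀ ⦃f⦄, f ∈ chords W₂ → ¬ Interlace e f
  mem_or_mem : ∀ ⦃e⦄, e ∈ chords V → ¬ Interlace e c → e ∈ chords W₁ ∨ e ∈ chords W₂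
  eq_of_mem_of_mem : ∀ ⦃e⦄, e ∈ chords W₁ → e ∈ chords W₂ → e = c

namespace IsSplit

lemma symm (h : IsSplit V W₁ W₂ c) : IsSplit V W₂ W₁ c where
  mem_left := h.mem_right
  mem_right := h.mem_left
  left_subset := h.right_subset
  right_subset := h.left_subset
  not_interlace _ he _ hf hef := h.not_interlace hf he hef.symm
  mem_or_mem _ he hec := (h.mem_or_mem he hec).symm
  eq_of_mem_of_mem _ he₂ he₁ := h.eq_of_mem_of_mem he₁ he₂

lemma mem_of_left (h : IsSplit V W₁ W₂ c) (hT : IsChordTriangulation W₁ T) : c ∈ T :=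
  hT.mem_of_not_interlace h.mem_left fun _ hf hcf =>
    h.not_interlace (hT.subset_chords hf) h.mem_right hcf.symm

lemma isChordTriangulation_inter (h : IsSplit V W₁ W₂ c) (hT : IsChordTriangulation V T)
    (hc : c ∈ T) : IsChordTriangulation W₁ (T ∩ chords W₁) where
  subset_chords := inter_subset_right
  not_interlace _ he _ hf := hT.not_interlace (mem_inter.1 he).1 (mem_inter.1 hf).1
  mem_of_not_interlace e he hmax := by
    refine mem_inter.2 ⟨hT.mem_of_not_interlace (h.left_subset he) fun f hf hef => ?_, he⟩
    rcases h.mem_or_mem (hT.subset_chords hf) (hT.not_interlace hf hc) with hf₁ | hf₂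
    · exact hmax f (mem_inter.2 ⟨hf, hf₁⟩) hef
    · exact h.not_interlace he hf₂ hef

lemma isChordTriangulation_union (h : IsSplit V W₁ W₂ c) (hT₁ : IsChordTriangulation W₁ T₁)
    (hT₂ : IsChordTriangulation W₂ T₂) : IsChordTriangulation V (T₁ ∪ T₂) where
  subset_chords := union_subset (hT₁.subset_chords.trans h.left_subset)
    (hT₂.subset_chords.trans h.right_subset)
  not_interlace e he f hf hef := by
    rcases mem_union.1 he with he | he <;> rcases mem_union.1 hf with hf | hf
    · exact hT₁.not_interlace he hf hef
    · exact h.not_interlace (hT₁.subset_chords he) (hT₂.subset_chords hf) hef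
    · exact h.not_interlace (hT₁.subset_chords hf) (hT₂.subset_chords he) hef.symm
    · exact hT₂.not_interlace he hf hef
  mem_of_not_interlace e he hmax := by
    rcases h.mem_or_mem he (hmax c (mem_union_left _ (h.mem_of_left hT₁))) with he | he
    · exact mem_union_left _ (hT₁.mem_of_not_interlace he fun f hf => hmax f (mem_union_left _ hf))
    · exact mem_union_right _
        (hT₂.mem_of_not_interlace he fun f hf => hmax f (mem_union_right _ hf))

lemma inter_union_inter (h : IsSplit V W₁ W₂ c) (hT : IsChordTriangulation V T) (hc : c ∈ T) :
    T ∩ chords W₁ ∪ T ∩ chords W₂ = T := by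
  rw [← inter_union_distrib_left, inter_eq_left]
  exact fun e he => mem_union.2 (h.mem_or_mem (hT.subset_chords he) (hT.not_interlace he hc))

lemma union_inter_left (h : IsSplit V W₁ W₂ c) (hT₁ : IsChordTriangulation W₁ T₁)
    (hT₂ : IsChordTriangulation W₂ T₂) : (T₁ ∪ T₂) ∩ chords W₁ = T₁ := by
  rw [union_inter_distrib_right, inter_eq_left.2 hT₁.subset_chords, union_eq_left]
  intro e he
  obtain ⟨he₂, he₁⟩ := mem_inter.1 he
  rw [h.eq_of_mem_of_mem he₁ (hT₂.subset_chords he₂)]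
  exact h.mem_of_left hT₁

theorem card_triangulationsContaining (h : IsSplit V W₁ W₂ c) {A₁ A₂ : Finset (α × α)}
    (hA₁ : A₁ ⊆ chords W₁) (hA₂ : A₂ ⊆ chords W₂) :
    #(triangulationsContaining V (insert c (A₁ ∪ A₂))) =
      #(triangulationsContaining W₁ A₁) * #(triangulationsContaining W₂ A₂) := by
  rw [← card_product]
  refine card_nbij' (fun T => (T ∩ chords W₁, T ∩ chords W₂)) (fun P => P.1 ∪ P.2) ?_ ?_ ?_ ?_
  all_goals
    simp only [Set.MapsTo, Set.LeftInvOn, mem_coe, mem_product, mem_triangulationsContaining,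
      insert_subset_iff, union_subset_iff, Prod.forall, Prod.mk.injEq]
  · rintro T ⟨hT, hc, hTA₁, hTA₂⟩
    exact ⟨⟨h.isChordTriangulation_inter hT hc, subset_inter hTA₁ hA₁⟩,
      h.symm.isChordTriangulation_inter hT hc, subset_inter hTA₂ hA₂⟩
  · rintro T₁ T₂ ⟨⟨hT₁, hTA₁⟩, hT₂, hTA₂⟩
    exact ⟨h.isChordTriangulation_union hT₁ hT₂, mem_union_left _ (h.mem_of_left hT₁),
      hTA₁.trans subset_union_left, hTA₂.trans subset_union_right⟩
  · rintro T ⟨hT, hc, -⟩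
    exact h.inter_union_inter hT hc
  · rintro T₁ T₂ ⟨⟨hT₁, -⟩, hT₂, -⟩
    exact ⟨h.union_inter_left hT₁ hT₂, union_comm T₁ T₂ ▸ h.symm.union_inter_left hT₂ hT₁⟩

end IsSplit

/-- The vertices of the piece of the polygon `V` cut off by the chord `(a, b)` that does not
contain the side from the last vertex to the first. -/
def inside (V : Finset α) (a b : α) : Finset α := {x ∈ V | a ≤ x ∧ x ≤ b}

/-- The vertices of the other piece of the polygon `V` cut along the chord `(a, b)`. -/
def outside (V : Finset α) (a b : α) : Finset α := {x ∈ V | x ≤ a ∨ b ≤ x}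

lemma mem_inside : x ∈ inside V a b ↔ x ∈ V ∧ a ≤ x ∧ x ≤ b := mem_filter

lemma mem_outside : x ∈ outside V a b ↔ x ∈ V ∧ (x ≤ a ∨ b ≤ x) := mem_filter

lemma isSplit_inside_outside (h : (a, b) ∈ chords V) :
    IsSplit V (inside V a b) (outside V a b) (a, b) := by
  constructor <;> simp only [subset_iff, Prod.forall, Prod.mk.injEq, mem_chords, mem_inside,
    mem_outside, Interlace] at h ⊢ <;> grind

end Splitting

section Apex

variable {α : Type*} [LinearOrder α] {V : Finset α} {T : Finset (α × α)} {a b x : α}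

namespace IsChordTriangulation

lemma mem_of_forall_le_or_le (hT : IsChordTriangulation V T) (hab : (a, b) ∈ chords V)
    (h : ∀ x ∈ V, x ≤ a ∨ b ≤ x) : (a, b) ∈ T :=
  hT.mem_of_not_interlace hab fun f hf => by
    have := mem_chords.1 (hT.subset_chords hf)
    grind [Interlace]

lemma mem_of_forall_le_and_le (hT : IsChordTriangulation V T) (hab : (a, b) ∈ chords V)
    (h : ∀ x ∈ V, a ≤ x ∧ x ≤ b) : (a, b) ∈ T :=
  hT.mem_of_not_interlace hab fun f hf => by
    have := mem_chords.1 (hT.subset_chords hf)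
    grind [Interlace]

lemma exists_inner_apex (hT : IsChordTriangulation V T) (hab : (a, b) ∈ T) (hx : x ∈ V)
    (hax : a < x) (hxb : x < b) : ∃ k ∈ V, a < k ∧ k < b ∧ (a, k) ∈ T ∧ (k, b) ∈ T := by
  obtain ⟨ha, hb, -⟩ := mem_chords.1 (hT.subset_chords hab)
  obtain ⟨y, hy, hymin⟩ := exists_min_image {y ∈ V | a < y} id ⟨x, by simp [hx, hax]⟩
  simp only [mem_filter, id_eq] at hy hymin
  have hay : (a, y) ∈ T :=
    hT.mem_of_forall_le_or_le (mem_chords.2 ⟨ha, hy⟩) fun z hz =>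
      (le_or_gt z a).imp_right fun haz => hymin z ⟨hz, haz⟩
  -- The apex is the last neighbour of `a` before `b`.
  obtain ⟨k, hk, hkmax⟩ := exists_max_image {k ∈ V | a < k ∧ k < b ∧ (a, k) ∈ T} id
    ⟨y, by simpa [hy, hay] using (hymin x ⟨hx, hax⟩).trans_lt hxb⟩
  simp only [mem_filter, id_eq] at hk hkmax
  refine ⟨k, hk.1, hk.2.1, hk.2.2.1, hk.2.2.2,
    hT.mem_of_not_interlace (mem_chords.2 ⟨hk.1, hb, hk.2.2.1⟩) fun f hf hkf => ?_⟩
  have hfV := mem_chords.1 (hT.subset_chords hf)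
  have hfab := hT.not_interlace hf hab
  have hfak := hT.not_interlace hf hk.2.2.2
  have hfmax := hkmax f.2
  grind [Interlace]

lemma exists_outer_apex (hT : IsChordTriangulation V T) (hab : (a, b) ∈ T) (hx : x ∈ V)
    (hxab : x < a ∨ b < x) : ∃ q ∈ V, (q < a ∧ (q, a) ∈ T ∧ (q, b) ∈ T) ∨
      (b < q ∧ (b, q) ∈ T ∧ (a, q) ∈ T) := by
  obtain ⟨ha, hb, hlt⟩ := mem_chords.1 (hT.subset_chords hab)
  have hV : V.Nonempty := ⟨x, hx⟩
  have hbase : (V.min' hV, V.max' hV) ∈ T :=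
    hT.mem_of_forall_le_and_le (mem_chords.2 ⟨V.min'_mem hV, V.max'_mem hV,
      (V.min'_le a ha).trans_lt (hlt.trans_le (V.le_max' b hb))⟩)
      fun y hy => ⟨V.min'_le y hy, V.le_max' y hy⟩
  have hne : (V.min' hV, V.max' hV) ≠ (a, b) := by
    have := V.min'_le x hx
    have := V.le_max' x hx
    grind
  -- The apex lies on a minimal chord strictly enclosing `(a, b)`.
  obtain ⟨⟨c, d⟩, hcd, hmin⟩ := exists_minimalFor
    (fun e : α × α => (OrderDual.toDual e.1, e.2)) {e ∈ T | e.1 ≤ a ∧ b ≤ e.2 ∧ e ≠ (a, b)}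
    ⟨_, mem_filter.2 ⟨hbase, V.min'_le a ha, V.le_max' b hb, hne⟩⟩
  simp only [mem_filter, Prod.forall, Prod.mk_le_mk, OrderDual.toDual_le_toDual, ne_eq,
    Prod.mk.injEq] at hcd hmin
  obtain ⟨hcdT, hca, hbd, hcdne⟩ := hcd
  obtain ⟨y, hy, hcy, hyd⟩ : ∃ y ∈ V, c < y ∧ y < d := by
    rcases hca.lt_or_eq with hca | rfl
    · exact ⟨a, ha, hca, hlt.trans_le hbd⟩
    · exact ⟨b, hb, hlt, hbd.lt_of_ne' fun h => hcdne ⟨rfl, h⟩⟩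
  obtain ⟨k, -, hck, hkd, hckT, hkdT⟩ := hT.exists_inner_apex hcdT hy hcy hyd
  have hcross₁ := hT.not_interlace hckT hab
  have hcross₂ := hT.not_interlace hkdT hab
  have hk' : k ≤ a ∨ b ≤ k := by grind [Interlace]
  rcases hk' with hka | hbk
  · obtain ⟨rfl, rfl⟩ : k = a ∧ d = b := by
      by_contra hne
      exact hck.not_ge (hmin k d ⟨hkdT, hka, hbd, hne⟩ ⟨hck.le, le_rfl⟩).1
    exact ⟨c, (mem_chords.1 (hT.subset_chords hcdT)).1, Or.inl ⟨hck, hckT, hcdT⟩⟩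
  · obtain ⟨rfl, rfl⟩ : c = a ∧ k = b := by
      by_contra hne
      exact hkd.not_ge (hmin c k ⟨hckT, hca, hbk, hne⟩ ⟨le_rfl, hkd.le⟩).2
    exact ⟨d, (mem_chords.1 (hT.subset_chords hcdT)).2.1, Or.inr ⟨hkd, hkdT, hcdT⟩⟩

end IsChordTriangulation

end Apex

section Triangles

variable {α : Type*} [LinearOrder α] {V : Finset α} {T A₁ A₂ A₃ : Finset (α × α)}
  {x y z x' y' z' : α}

/-- The three sides of the triangle with vertices `x < y < z`. -/
def triangle (x y z : α) : Finset (α × α) := {(x, y), (y, z), (x, z)}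

lemma triangle_subset : triangle x y z ⊆ T ↔ (x, y) ∈ T ∧ (y, z) ∈ T ∧ (x, z) ∈ T := by
  simp [triangle, insert_subset_iff]

lemma eq_of_triangle_subset (hT : IsChordTriangulation V T) (h : triangle x y z ⊆ T)
    (h' : triangle x' y' z' ⊆ T) (hxy' : x < y') (hx'y : x' < y) (hyz' : y < z') (hy'z : y' < z) :
    x = x' ∧ y = y' ∧ z = z' := by
  obtain ⟨hxy, hyz, hxz⟩ := triangle_subset.1 h
  obtain ⟨hxy₁, hyz₁, hxz₁⟩ := triangle_subset.1 h'
  have hy : y = y' := by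
    rcases lt_trichotomy y y' with hlt | heq | hlt
    · exact (hT.not_interlace hyz hxy₁ (Or.inr ⟨hx'y, hlt, hy'z⟩)).elim
    · exact heq
    · exact (hT.not_interlace hyz₁ hxy (Or.inr ⟨hxy', hlt, hyz'⟩)).elim
  subst hy
  have hx : ¬ x < x' := fun hlt => by
    have := hT.not_interlace hxz hxz₁
    have := hT.not_interlace hxy hxz₁
    grind [Interlace]
  have hx' : ¬ x' < x := fun hlt => by
    have := hT.not_interlace hxz hxz₁
    have := hT.not_interlace hxy₁ hxz
    grind [Interlace]
  have hz : ¬ z < z' := fun hlt => by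
    have := hT.not_interlace hxz hyz₁
    grind [Interlace]
  have hz' : ¬ z' < z := fun hlt => by
    have := hT.not_interlace hxz₁ hyz
    grind [Interlace]
  exact ⟨le_antisymm (not_lt.1 hx') (not_lt.1 hx), rfl, le_antisymm (not_lt.1 hz') (not_lt.1 hz)⟩

lemma card_triangulationsContaining_empty_of_card_le_three (hV : #V ≤ 3) :
    #(triangulationsContaining V ∅) = 1 := by
  have hnot : ∀ e ∈ chords V, ∀ f ∈ chords V, ¬ Interlace e f := by
    intro e he f hf h
    rw [mem_chords] at he hf
    have hsub : ({e.1, e.2, f.1, f.2} : Finset α) ⊆ V := by grind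
    have := (card_le_card hsub).trans hV
    rcases h with h | h <;> grind
  refine card_eq_one.2 ⟨chords V, eq_singleton_iff_unique_mem.2
    ⟨mem_triangulationsContaining.2 ⟨⟨Subset.rfl, hnot, fun e he _ => he⟩, empty_subset _⟩,
      fun T hT => ?_⟩⟩
  obtain ⟨hT, -⟩ := mem_triangulationsContaining.1 hT
  exact hT.subset_chords.antisymm fun e he =>
    hT.mem_of_not_interlace he fun f hf => hnot e he f (hT.subset_chords hf)

theorem card_triangulationsContaining_triangle_union (hxy : (x, y) ∈ chords V)
    (hyz : (y, z) ∈ chords V) (hA₁ : A₁ ⊆ chords (inside V x y))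
    (hA₂ : A₂ ⊆ chords (inside V y z)) (hA₃ : A₃ ⊆ chords (outside V x z)) :
    #(triangulationsContaining V (triangle x y z ∪ (A₁ ∪ A₂ ∪ A₃))) =
      #(triangulationsContaining (inside V x y) A₁) *
        #(triangulationsContaining (inside V y z) A₂) *
          #(triangulationsContaining (outside V x z) A₃) := by
  obtain ⟨hx, hy, hxy'⟩ := mem_chords.1 hxy
  obtain ⟨-, hz, hyz'⟩ := mem_chords.1 hyz
  dsimp only at hx hy hz hxy' hyz'
  have hxz' := hxy'.trans hyz'
  set U := inside V x z
  set W := outside U x y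
  have hxyU : (x, y) ∈ chords U := by grind [mem_chords, mem_inside]
  have hyzW : (y, z) ∈ chords W := by grind [mem_chords, mem_inside, mem_outside]
  have hxyU' : inside U x y = inside V x y := by grind [mem_inside]
  have hyzW' : inside W y z = inside V y z := by grind [mem_inside, mem_outside]
  have hW : #(outside W y z) ≤ 3 := by
    refine (card_le_card (t := {x, y, z}) ?_).trans card_le_three
    grind [mem_inside, mem_outside]
  have splitV := isSplit_inside_outside (mem_chords.2 ⟨hx, hz, hxz'⟩)
  have splitU := isSplit_inside_outside hxyU
  have splitW := isSplit_inside_outside hyzW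
  rw [hxyU'] at splitU
  rw [hyzW'] at splitW
  have hA₂W : insert (y, z) (A₂ ∪ ∅) ⊆ chords W := insert_subset hyzW <|
    union_subset (hA₂.trans splitW.left_subset) (empty_subset _)
  have hU : insert (x, y) (A₁ ∪ insert (y, z) (A₂ ∪ ∅)) ⊆ chords U := insert_subset hxyU <|
    union_subset (hA₁.trans splitU.left_subset) (hA₂W.trans splitU.right_subset)
  calc #(triangulationsContaining V (triangle x y z ∪ (A₁ ∪ A₂ ∪ A₃)))
      = #(triangulationsContaining V
          (insert (x, z) (insert (x, y) (A₁ ∪ insert (y, z) (A₂ ∪ ∅)) ∪ A₃))) := by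
        congr 2; ext e; simp [triangle]; tauto
    _ = _ := by
        rw [splitV.card_triangulationsContaining hU hA₃,
          splitU.card_triangulationsContaining hA₁ hA₂W,
          splitW.card_triangulationsContaining hA₂ (empty_subset _),
          card_triangulationsContaining_empty_of_card_le_three hW, mul_one]

end Triangles

section Catalan

variable {α : Type*} [LinearOrder α] {V : Finset α} {x y z i p j q : α} {N : ℕ}

lemma card_triangulationsContaining_triangle (hxy : (x, y) ∈ chords V) (hyz : (y, z) ∈ chords V) :
    #(triangulationsContaining V (triangle x y z)) =
      #(triangulationsContaining (inside V x y) ∅) * #(triangulationsContaining (inside V y z) ∅) *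
        #(triangulationsContaining (outside V x z) ∅) := by
  simpa using card_triangulationsContaining_triangle_union hxy hyz (empty_subset _)
    (empty_subset _) (empty_subset _)

lemma card_inside_add_card_outside (h : (x, y) ∈ chords V) :
    #(inside V x y) + #(outside V x y) = #V + 2 := by
  obtain ⟨hx, hy, hxy⟩ := mem_chords.1 h
  dsimp only at hx hy hxy
  rw [← card_union_add_card_inter, ← card_pair hxy.ne]
  congr 2 <;> grind [mem_inside, mem_outside]

lemma card_inside_orderEmbOfFin {m : ℕ} (hV : #V = m) (a b : Fin m) :
    #(inside V (V.orderEmbOfFin hV a) (V.orderEmbOfFin hV b)) = b + 1 - a := by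
  rw [← Fin.card_Icc, ← card_map (V.orderEmbOfFin hV).toEmbedding]
  congr 1
  ext x
  simp only [mem_inside, mem_map, mem_Icc, RelEmbedding.coe_toEmbedding]
  constructor
  · rintro ⟨hx, hax, hxb⟩
    obtain ⟨k, rfl⟩ : x ∈ Set.range (V.orderEmbOfFin hV) := by rwa [range_orderEmbOfFin]
    exact ⟨k, by simpa using And.intro hax hxb, rfl⟩
  · rintro ⟨k, hk, rfl⟩
    exact ⟨orderEmbOfFin_mem V hV k, by simpa using hk⟩

lemma pairwiseDisjoint_triangulationsContaining_triangle {I J K : Finset α}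
    (hIJ : ∀ i ∈ I, ∀ j ∈ J, i < j) (hJK : ∀ j ∈ J, ∀ k ∈ K, j < k) :
    (SetLike.coe (I ×ˢ J ×ˢ K)).PairwiseDisjoint
      fun t => triangulationsContaining V (triangle t.1 t.2.1 t.2.2) := by
  rintro ⟨i, j, k⟩ ht ⟨i', j', k'⟩ ht' hne
  simp only [mem_coe, mem_product] at ht ht'
  refine disjoint_left.2 fun T hT hT' => hne ?_
  rw [mem_triangulationsContaining] at hT hT'
  obtain ⟨rfl, rfl, rfl⟩ := eq_of_triangle_subset hT.1 hT.2 hT'.2 (hIJ i ht.1 j' ht'.2.1)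
    (hIJ i' ht'.1 j ht.2.1) (hJK j ht.2.1 k' ht'.2.2) (hJK j' ht'.2.1 k ht.2.2)
  rfl

lemma card_triangulationsContaining_empty_eq_sum {l r : α} (hl : l ∈ V) (hr : r ∈ V)
    (hV : ∀ x ∈ V, l ≤ x ∧ x ≤ r) (hx : x ∈ V) (hlx : l < x) (hxr : x < r) :
    #(triangulationsContaining V ∅) = ∑ k ∈ V with l < k ∧ k < r,
      #(triangulationsContaining (inside V l k) ∅) *
        #(triangulationsContaining (inside V k r) ∅) := by
  have hunion : triangulationsContaining V ∅ = ({l} ×ˢ {k ∈ V | l < k ∧ k < r} ×ˢ {r}).biUnion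
      fun t => triangulationsContaining V (triangle t.1 t.2.1 t.2.2) := by
    ext T
    simp only [mem_biUnion, mem_product, mem_singleton, mem_filter, Prod.exists,
      mem_triangulationsContaining, triangle_subset]
    constructor
    · rintro ⟨hT, -⟩
      have hlr := hT.mem_of_forall_le_and_le (mem_chords.2 ⟨hl, hr, hlx.trans hxr⟩) hV
      obtain ⟨k, hk, hlk, hkr, hlkT, hkrT⟩ := hT.exists_inner_apex hlr hx hlx hxr
      exact ⟨l, k, r, ⟨rfl, ⟨hk, hlk, hkr⟩, rfl⟩, hT, hlkT, hkrT, hlr⟩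
    · rintro ⟨_, _, _, -, hT, -⟩
      exact ⟨hT, empty_subset _⟩
  have houtside : #(outside V l r) ≤ 3 := by
    refine (card_le_card (t := {l, r}) fun y hy => ?_).trans (card_le_two.trans (by simp))
    grind [mem_outside]
  rw [hunion, card_biUnion (pairwiseDisjoint_triangulationsContaining_triangle (by simp +contextual)
    (by simp +contextual)), sum_product, sum_singleton, sum_product]
  refine sum_congr rfl fun k hk => ?_
  rw [mem_filter] at hk
  rw [sum_singleton, card_triangulationsContaining_triangle (mem_chords.2 ⟨hl, hk.1, hk.2.1⟩)
    (mem_chords.2 ⟨hk.1, hr, hk.2.2⟩),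
    card_triangulationsContaining_empty_of_card_le_three houtside, mul_one]

theorem card_triangulationsContaining_empty (hV : #V = N + 2) :
    #(triangulationsContaining V ∅) = catalan N := by
  induction N using Nat.strong_induction_on generalizing V with
  | _ N ih =>
  obtain _ | M := N
  · rw [card_triangulationsContaining_empty_of_card_le_three (by lia), catalan_zero]
  set e := V.orderEmbOfFin hV
  have he : ∀ k, e k ∈ V := orderEmbOfFin_mem V hV
  have hrange : ∀ x ∈ V, ∃ k, e k = x := fun x hx => by
    rwa [← Set.mem_range, range_orderEmbOfFin]
  have hbounds : ∀ x ∈ V, e 0 ≤ x ∧ x ≤ e (Fin.last _) := fun x hx => by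
    obtain ⟨k, rfl⟩ := hrange x hx
    exact ⟨e.monotone (Fin.zero_le k), e.monotone (Fin.le_last k)⟩
  have hpos (k : Fin (M + 1)) : e 0 < e k.succ.castSucc :=
    e.strictMono (Fin.castSucc_pos k.succ_pos)
  have hlast (k : Fin (M + 1)) : e k.succ.castSucc < e (Fin.last _) :=
    e.strictMono (Fin.castSucc_lt_last _)
  rw [card_triangulationsContaining_empty_eq_sum (he _) (he _) hbounds (he _) (hpos 0) (hlast 0),
    catalan_succ]
  refine (sum_bij (fun k _ => e k.succ.castSucc) (fun k _ => mem_filter.2 ⟨he _, hpos k, hlast k⟩)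
    (fun k _ k' _ h => by simpa using h) (fun x hx => ?_) fun k _ => ?_).symm
  · obtain ⟨hx, h0x, hx1⟩ := mem_filter.1 hx
    obtain ⟨k, rfl⟩ := hrange x hx
    rw [e.lt_iff_lt, Fin.lt_def] at h0x hx1
    simp only [Fin.val_zero, Fin.val_last] at h0x hx1
    exact ⟨⟨k - 1, by lia⟩, mem_univ _, congrArg e (Fin.ext (by simp; lia))⟩
  · rw [ih k (by lia) (by rw [card_inside_orderEmbOfFin]; simp),
      ih (M - k) (by lia) (by rw [card_inside_orderEmbOfFin]; simp; lia)]

/-- The sides of the quadrilateral with vertices `i < p < j < q`, together with its diagonal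
`(i, j)`. -/
def quad (i p j q : α) : Finset (α × α) := triangle i p j ∪ triangle i j q

lemma card_triangulationsContaining_quad (hip : (i, p) ∈ chords V) (hpj : (p, j) ∈ chords V)
    (hjq : (j, q) ∈ chords V) :
    #(triangulationsContaining V (quad i p j q)) =
      #(triangulationsContaining (inside V i p) ∅) * #(triangulationsContaining (inside V p j) ∅) *
        #(triangulationsContaining (inside V j q) ∅) *
        #(triangulationsContaining (outside V i q) ∅) := by
  obtain ⟨hi, hp, hip'⟩ := mem_chords.1 hip
  obtain ⟨-, hj, hpj'⟩ := mem_chords.1 hpj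
  dsimp only at hi hp hip' hj hpj'
  have hij : (i, j) ∈ chords V := mem_chords.2 ⟨hi, hj, hip'.trans hpj'⟩
  have hsides : (i, p) ∈ chords (inside V i j) ∧ (p, j) ∈ chords (inside V i j) := by
    grind [mem_chords, mem_inside]
  have htriangle : triangle i p j ⊆ chords (inside V i j) := by
    grind [triangle_subset, mem_chords, mem_inside]
  have hip_inside : inside (inside V i j) i p = inside V i p := by grind [mem_inside]
  have hpj_inside : inside (inside V i j) p j = inside V p j := by grind [mem_inside]
  have houtside : #(outside (inside V i j) i j) ≤ 3 := by
    refine (card_le_card (t := {i, j}) fun y hy => ?_).trans (card_le_two.trans (by simp))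
    grind [mem_inside, mem_outside]
  calc #(triangulationsContaining V (quad i p j q))
      = #(triangulationsContaining V (triangle i j q ∪ (triangle i p j ∪ ∅ ∪ ∅))) := by
        rw [quad, union_empty, union_empty, union_comm]
    _ = _ := by
        rw [card_triangulationsContaining_triangle_union hij hjq htriangle (empty_subset _)
          (empty_subset _), card_triangulationsContaining_triangle hsides.1 hsides.2, hip_inside,
          hpj_inside, card_triangulationsContaining_empty_of_card_le_three houtside, mul_one]

end Catalan

section Fin

variable {n : ℕ} {a b i p j q k : Fin (n + 2)}

lemma mem_chords_univ : (a, b) ∈ chords univ ↔ a < b := by simp [mem_chords]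

lemma card_inside_univ : #(inside univ a b) = b + 1 - a := by
  rw [← Fin.card_Icc]
  congr 1
  ext x
  simp [mem_inside]

lemma card_triangulationsContaining_inside_univ (h : a < b) :
    #(triangulationsContaining (inside univ a b) ∅) = catalan (b - a - 1) :=
  card_triangulationsContaining_empty <| by rw [card_inside_univ]; lia

lemma card_triangulationsContaining_outside_univ (h : a < b) :
    #(triangulationsContaining (outside univ a b) ∅) = catalan (n + 2 - (b - a) - 1) :=
  card_triangulationsContaining_empty <| by
    have := card_inside_add_card_outside (mem_chords_univ.2 h)
    rw [card_inside_univ, card_univ, Fintype.card_fin] at this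
    lia

lemma card_triangulationsContaining_triangle_univ (hij : i < j) (hjk : j < k) :
    #(triangulationsContaining univ (triangle i j k)) =
      catalan (j - i - 1) * catalan (k - j - 1) * catalan (n + 2 - (k - i) - 1) := by
  rw [card_triangulationsContaining_triangle (mem_chords_univ.2 hij) (mem_chords_univ.2 hjk),
    card_triangulationsContaining_inside_univ hij, card_triangulationsContaining_inside_univ hjk,
    card_triangulationsContaining_outside_univ (hij.trans hjk)]

lemma card_triangulationsContaining_quad_univ (hip : i < p) (hpj : p < j) (hjq : j < q) :
    #(triangulationsContaining univ (quad i p j q)) =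
      catalan (p - i - 1) * catalan (j - p - 1) * catalan (q - j - 1) *
        catalan (n + 2 - (q - i) - 1) := by
  rw [card_triangulationsContaining_quad (mem_chords_univ.2 hip) (mem_chords_univ.2 hpj)
    (mem_chords_univ.2 hjq), card_triangulationsContaining_inside_univ hip,
    card_triangulationsContaining_inside_univ hpj, card_triangulationsContaining_inside_univ hjq,
    card_triangulationsContaining_outside_univ (hip.trans (hpj.trans hjq))]

end Fin

section Flips

variable {α : Type*} [LinearOrder α] {V : Finset α} {X Y : Finset (α × α)} {i p j q u v w : α}

lemma quad_subset : quad i p j q ⊆ X ↔ ((i, p) ∈ X ∧ (p, j) ∈ X ∧ (i, j) ∈ X) ∧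
    (i, j) ∈ X ∧ (j, q) ∈ X ∧ (i, q) ∈ X := by
  rw [quad, union_subset_iff, triangle_subset, triangle_subset]

lemma eq_of_interlace_of_not_interlace_quad {f : α × α} (hpj : p < j) (hjq : j < q)
    (hf : Interlace (i, j) f) (hfip : ¬ Interlace (i, p) f) (hfpj : ¬ Interlace (p, j) f)
    (hfjq : ¬ Interlace (j, q) f) (hfiq : ¬ Interlace (i, q) f) : f = (p, q) := by
  obtain ⟨f₁, f₂⟩ := f
  simp only [Interlace, not_or, not_and, not_lt] at hf hfip hfpj hfjq hfiq
  obtain ⟨hif₁, hf₁j, hjf₂⟩ | ⟨hf₁i, hif₂, hf₂j⟩ := hf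
  · have hf₁ : f₁ = p := by
      refine le_antisymm ?_ ?_
      · exact le_of_not_gt fun h => (hfpj.1 h hf₁j).not_gt hjf₂
      · exact le_of_not_gt fun h => (hfip.1 hif₁ h).not_gt (hpj.trans hjf₂)
    have hf₂ : f₂ = q := by
      refine le_antisymm (hfiq.1 hif₁ (hf₁j.trans hjq)) ?_
      exact hfjq.2 hf₁j hjf₂
    rw [hf₁, hf₂]
  · exact absurd (hfiq.2 hf₁i hif₂) (hf₂j.trans hjq).not_ge

theorem IsChordTriangulation.eq_insert_erase_of_quad_subset (hX : IsChordTriangulation V X)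
    (hY : IsChordTriangulation V Y) (hXY : X \ Y = {(i, j)}) (hYX : #(Y \ X) = 1)
    (hquad : quad i p j q ⊆ X) : Y = insert (p, q) (X.erase (i, j)) := by
  obtain ⟨⟨hip, hpj, hij⟩, -, hjq, hiq⟩ := quad_subset.1 hquad
  have hip_lt : i < p := (mem_chords.1 (hX.subset_chords hip)).2.2
  have hpj_lt : p < j := (mem_chords.1 (hX.subset_chords hpj)).2.2
  have hjq_lt : j < q := (mem_chords.1 (hX.subset_chords hjq)).2.2
  have hsdiff : ∀ e, e ∈ X ∧ e ∉ Y ↔ e = (i, j) := fun e => by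
    rw [← mem_sdiff, hXY, mem_singleton]
  -- By maximality of `Y` some chord of `Y` crosses `(i, j)`; it cannot cross the four sides of the
  -- quadrilateral, which leaves only the other diagonal.
  obtain ⟨f, hfY, hf⟩ : ∃ f ∈ Y, Interlace (i, j) f := by
    by_contra! h
    exact ((hsdiff (i, j)).2 rfl).2 (hY.mem_of_not_interlace (hX.subset_chords hij) h)
  have hside : ∀ e ∈ X, e ≠ (i, j) → ¬ Interlace e f := fun e he hne =>
    hY.not_interlace (by_contra fun heY => hne ((hsdiff e).1 ⟨he, heY⟩)) hfY
  have hf_eq : f = (p, q) :=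
    eq_of_interlace_of_not_interlace_quad hpj_lt hjq_lt hf
      (hside _ hip fun h => hpj_lt.ne (Prod.ext_iff.1 h).2)
      (hside _ hpj fun h => hip_lt.ne' (Prod.ext_iff.1 h).1)
      (hside _ hjq fun h => hjq_lt.ne' (Prod.ext_iff.1 h).2)
      (hside _ hiq fun h => hjq_lt.ne' (Prod.ext_iff.1 h).2)
  have hfX : f ∉ X := fun h => hX.not_interlace hij h hf
  obtain ⟨g, hg⟩ := card_eq_one.1 hYX
  obtain rfl : f = g := by rw [← mem_singleton, ← hg, mem_sdiff]; exact ⟨hfY, hfX⟩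
  rw [← hf_eq, ← sdiff_union_inter Y X, hg, inter_comm, ← Finset.sdiff_sdiff_self_left, hXY,
    sdiff_singleton_eq_erase, insert_eq]

/-- The thresholds `u`, `v`, `w` cut the vertices into the four consecutive blocks `i < u`,
`u ≤ p < v`, `v ≤ j < w` and `w ≤ q`; some chord in `X` joins the first block to the third. -/
def JoinsBlocks (u v w : α) (X : Finset (α × α)) : Prop :=
  ∃ i j, i < u ∧ v ≤ j ∧ j < w ∧ (i, j) ∈ X

theorem exists_quad_subset_of_joinsBlocks (hX : IsChordTriangulation V X)
    (hY : IsChordTriangulation V Y) (hXY : #(X \ Y) = 1) (hYX : #(Y \ X) = 1)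
    (hXjoin : JoinsBlocks u v w X) (hYjoin : ¬ JoinsBlocks u v w Y) (hu : u ∈ V) (hw : w ∈ V)
    (huv : u < v) :
    ∃ i p j q, i < u ∧ (u ≤ p ∧ p < v) ∧ (v ≤ j ∧ j < w) ∧ w ≤ q ∧ quad i p j q ⊆ X ∧
      Y = insert (p, q) (X.erase (i, j)) := by
  obtain ⟨i, j, hi, hvj, hjw, hij⟩ := hXjoin
  have hnotMem : ∀ a b, a < u → v ≤ b → b < w → (a, b) ∉ Y := fun a b ha hb hb' hab =>
    hYjoin ⟨a, b, ha, hb, hb', hab⟩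
  obtain ⟨g, hg⟩ := card_eq_one.1 hXY
  have hjoin : ∀ a b, (a, b) ∈ X → a < u → v ≤ b → b < w → (a, b) = g :=
    fun a b hab ha hb hb' => by
      rw [← mem_singleton, ← hg, mem_sdiff]
      exact ⟨hab, hnotMem a b ha hb hb'⟩
  obtain rfl := hjoin i j hij hi hvj hjw
  obtain ⟨p, -, hip, hpj, hipX, hpjX⟩ := hX.exists_inner_apex hij hu hi (huv.trans_le hvj)
  obtain ⟨q, -, hq⟩ := hX.exists_outer_apex hij hw (Or.inr hjw)
  have hp : u ≤ p ∧ p < v := by grind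
  obtain ⟨hwq, hjqX, hiqX⟩ : w ≤ q ∧ (j, q) ∈ X ∧ (i, q) ∈ X := by grind
  have hquad : quad i p j q ⊆ X := quad_subset.2 ⟨⟨hipX, hpjX, hij⟩, hij, hjqX, hiqX⟩
  exact ⟨i, p, j, q, hi, hp, ⟨hvj, hjw⟩, hwq, hquad,
    hX.eq_insert_erase_of_quad_subset hY hg hYX hquad⟩

end Flips

section Bridge

variable {m n : ℕ}

lemma cycBtw_iff_of_lt {a b x : Fin m} (h : a < b) : CycBtw a b x ↔ a < x ∧ x < b := by
  rw [CycBtw, Fin.sub_val_of_le h.le]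
  rcases lt_or_ge x a with hx | hx
  · rw [Fin.coe_sub_iff_lt.2 hx]; simp only [Fin.lt_def] at *; omega
  · rw [Fin.sub_val_of_le hx]; simp only [Fin.lt_def, Fin.le_def] at *; omega

lemma cycBtw_swap_iff_of_lt {a b x : Fin m} (h : a < b) : CycBtw b a x ↔ x < a ∨ b < x := by
  rw [CycBtw, Fin.coe_sub_iff_lt.2 h]
  rcases lt_or_ge x b with hx | hx
  · rw [Fin.coe_sub_iff_lt.2 hx]; simp only [Fin.lt_def] at *; omega
  · rw [Fin.sub_val_of_le hx]; simp only [Fin.lt_def, Fin.le_def] at *; omega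

lemma polyAdj_symm {a b : Fin m} (h : PolyAdj a b) : PolyAdj b a := Or.symm h

lemma polyAdj_iff_of_lt {a b : Fin (n + 2)} (h : a < b) :
    PolyAdj a b ↔ b.val = a.val + 1 ∨ (a.val = 0 ∧ b.val = n + 1) := by
  rw [PolyAdj, Fin.sub_val_of_le h.le, Fin.coe_sub_iff_lt.2 h]
  simp only [Fin.lt_def] at h
  omega

lemma crosses_iff_interlace {a b c d : Fin m} (hab : a < b) (hcd : c < d) :
    Crosses s(a, b) s(c, d) ↔ Interlace (a, b) (c, d) := by
  constructor
  · intro h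
    obtain ⟨c', d', hcd', (hcross : Xor _ _)⟩ := h a b rfl
    obtain ⟨c'', d'', hcd'', (hcross' : Xor _ _)⟩ := h b a Sym2.eq_swap
    rw [cycBtw_iff_of_lt hab, cycBtw_iff_of_lt hab] at hcross
    rw [cycBtw_swap_iff_of_lt hab, cycBtw_swap_iff_of_lt hab] at hcross'
    rw [Sym2.eq_iff] at hcd' hcd''
    simp only [Interlace]
    grind
  · intro h x y hxy
    refine ⟨c, d, rfl, ?_⟩
    simp only [Interlace] at h
    rcases Sym2.eq_iff.1 hxy with ⟨rfl, rfl⟩ | ⟨rfl, rfl⟩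
    · rw [cycBtw_iff_of_lt hab, cycBtw_iff_of_lt hab]
      change Xor _ _
      grind
    · rw [cycBtw_swap_iff_of_lt hab, cycBtw_swap_iff_of_lt hab]
      change Xor _ _
      grind

lemma isDiagonal_iff_of_lt {a b : Fin m} (h : a < b) : IsDiagonal s(a, b) ↔ ¬ PolyAdj a b := by
  refine ⟨fun hd => hd.2 a b rfl, fun hadj => ⟨by simpa using h.ne, fun x y hxy => ?_⟩⟩
  rcases Sym2.eq_iff.1 hxy with ⟨rfl, rfl⟩ | ⟨rfl, rfl⟩
  · exact hadj
  · exact fun hyx => hadj (polyAdj_symm hyx)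

lemma exists_lt_of_isDiagonal {e : Sym2 (Fin m)} (h : IsDiagonal e) :
    ∃ a b, a < b ∧ e = s(a, b) := by
  induction e using Sym2.ind with
  | _ a b =>
    rcases (show a ≠ b by simpa using h.1).lt_or_gt with hab | hba
    · exact ⟨a, b, hab, rfl⟩
    · exact ⟨b, a, hba, Sym2.eq_swap⟩

lemma mk_eq_mk_iff_of_lt {a b c d : Fin m} (hab : a < b) (hcd : c < d) :
    s(a, b) = s(c, d) ↔ (a, b) = (c, d) := by
  rw [Sym2.eq_iff, Prod.mk.injEq]
  grind

lemma not_interlace_of_polyAdj {a b : Fin (n + 2)} (hadj : PolyAdj a b) (h : a < b)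
    (f : Fin (n + 2) × Fin (n + 2)) : ¬ Interlace (a, b) f := by
  rw [polyAdj_iff_of_lt h] at hadj
  simp only [Interlace, Fin.lt_def]
  omega

open Classical in
/-- The diagonals of a triangulation together with the sides of the polygon, as chords written in
increasing order. -/
noncomputable def withSides (t : Triangulation n) : Finset (Fin (n + 2) × Fin (n + 2)) :=
  {e | e.1 < e.2 ∧ (s(e.1, e.2) ∈ t.val ∨ PolyAdj e.1 e.2)}

lemma mem_withSides {t : Triangulation n} {a b : Fin (n + 2)} :
    (a, b) ∈ withSides t ↔ a < b ∧ (s(a, b) ∈ t.val ∨ PolyAdj a b) := by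
  simp [withSides]

theorem isChordTriangulation_withSides (t : Triangulation n) :
    IsChordTriangulation univ (withSides t) := by
  obtain ⟨hdiag, hcross, hmax⟩ := t.2
  refine ⟨fun ⟨a, b⟩ he => mem_chords_univ.2 (mem_withSides.1 he).1, ?_, ?_⟩
  · rintro ⟨a, b⟩ he ⟨c, d⟩ hf hef
    obtain ⟨hab, he | he⟩ := mem_withSides.1 he
    · obtain ⟨hcd, hf | hf⟩ := mem_withSides.1 hf
      · exact hcross _ he _ hf ((crosses_iff_interlace hab hcd).2 hef)
      · exact not_interlace_of_polyAdj hf hcd _ hef.symm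
    · exact not_interlace_of_polyAdj he hab _ hef
  · rintro ⟨a, b⟩ he hf
    have hab := mem_chords_univ.1 he
    refine mem_withSides.2 ⟨hab, or_iff_not_imp_right.2 fun hadj => ?_⟩
    refine hmax _ ((isDiagonal_iff_of_lt hab).2 hadj) fun f hft hc => ?_
    obtain ⟨c, d, hcd, rfl⟩ := exists_lt_of_isDiagonal (hdiag f hft)
    exact hf (c, d) (mem_withSides.2 ⟨hcd, Or.inl hft⟩) ((crosses_iff_interlace hab hcd).1 hc)

open Classical in
/-- The chords in `X` other than the sides of the polygon, as unordered pairs. -/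
noncomputable def withoutSides (X : Finset (Fin (n + 2) × Fin (n + 2))) :
    Finset (Sym2 (Fin (n + 2))) :=
  {e | IsDiagonal e ∧ ∃ a b, a < b ∧ e = s(a, b) ∧ (a, b) ∈ X}

lemma mem_withoutSides {X : Finset (Fin (n + 2) × Fin (n + 2))} {a b : Fin (n + 2)} (h : a < b) :
    s(a, b) ∈ withoutSides X ↔ ¬ PolyAdj a b ∧ (a, b) ∈ X := by
  simp only [withoutSides, mem_filter, mem_univ, true_and, isDiagonal_iff_of_lt h,
    and_congr_right_iff]
  refine fun _ => ⟨?_, fun hX => ⟨a, b, h, rfl, hX⟩⟩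
  rintro ⟨c, d, hcd, he, hX⟩
  rwa [(mk_eq_mk_iff_of_lt h hcd).1 he]

theorem isTriangulation_withoutSides {X : Finset (Fin (n + 2) × Fin (n + 2))}
    (hX : IsChordTriangulation univ X) : IsTriangulation n (withoutSides X) := by
  have hdiag : ∀ e ∈ withoutSides X, IsDiagonal e := fun e he => by
    classical exact (mem_filter.1 he).2.1
  refine ⟨hdiag, fun e he f hf hc => ?_, fun e he hf => ?_⟩
  · obtain ⟨a, b, hab, rfl⟩ := exists_lt_of_isDiagonal (hdiag e he)
    obtain ⟨c, d, hcd, rfl⟩ := exists_lt_of_isDiagonal (hdiag f hf)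
    exact hX.not_interlace ((mem_withoutSides hab).1 he).2 ((mem_withoutSides hcd).1 hf).2
      ((crosses_iff_interlace hab hcd).1 hc)
  · obtain ⟨a, b, hab, rfl⟩ := exists_lt_of_isDiagonal he
    refine (mem_withoutSides hab).2 ⟨(isDiagonal_iff_of_lt hab).1 he,
      hX.mem_of_not_interlace (mem_chords_univ.2 hab) ?_⟩
    rintro ⟨c, d⟩ hfX hc
    have hcd : c < d := mem_chords_univ.1 (hX.subset_chords hfX)
    by_cases hadj : PolyAdj c d
    · exact not_interlace_of_polyAdj hadj hcd _ hc.symm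
    · exact hf _ ((mem_withoutSides hcd).2 ⟨hadj, hfX⟩) ((crosses_iff_interlace hab hcd).2 hc)

theorem exists_withSides_eq {X : Finset (Fin (n + 2) × Fin (n + 2))}
    (hX : IsChordTriangulation univ X) : ∃ t : Triangulation n, withSides t = X := by
  let t : Triangulation n := ⟨withoutSides X, isTriangulation_withoutSides hX⟩
  refine ⟨t, ?_⟩
  ext ⟨a, b⟩
  rw [mem_withSides]
  constructor
  · rintro ⟨hab, h | h⟩
    · exact ((mem_withoutSides hab).1 h).2
    · exact hX.mem_of_not_interlace (mem_chords_univ.2 hab) fun f _ =>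
        not_interlace_of_polyAdj h hab f
  · intro h
    have hab : a < b := mem_chords_univ.1 (hX.subset_chords h)
    exact ⟨hab, or_iff_not_imp_right.2 fun hadj => (mem_withoutSides hab).2 ⟨hadj, h⟩⟩

lemma card_withSides_sdiff (s t : Triangulation n) :
    #(withSides s \ withSides t) = #(s.val \ t.val) := by
  refine card_nbij (fun e => s(e.1, e.2)) ?_ ?_ ?_
  · rintro ⟨a, b⟩ he
    simp only [coe_sdiff, Set.mem_sdiff, mem_coe, mem_withSides] at he ⊢
    tauto
  · rintro ⟨a, b⟩ he ⟨c, d⟩ hf hef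
    simp only [coe_sdiff, Set.mem_sdiff, mem_coe, mem_withSides] at he hf
    exact (mk_eq_mk_iff_of_lt he.1.1 hf.1.1).1 hef
  · intro e he
    simp only [coe_sdiff, Set.mem_sdiff, mem_coe] at he
    obtain ⟨a, b, hab, rfl⟩ := exists_lt_of_isDiagonal (s.2.1 e he.1)
    have hadj := (isDiagonal_iff_of_lt hab).1 (s.2.1 _ he.1)
    refine ⟨(a, b), ?_, rfl⟩
    simp only [coe_sdiff, Set.mem_sdiff, mem_coe, mem_withSides]
    tauto

lemma withSides_injective : Function.Injective (withSides (n := n)) := fun s t hst =>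
  Subtype.ext <| Subset.antisymm
    (sdiff_eq_empty_iff_subset.1 <| card_eq_zero.1 <| by simp [← card_withSides_sdiff, hst])
    (sdiff_eq_empty_iff_subset.1 <| card_eq_zero.1 <| by simp [← card_withSides_sdiff, hst])

lemma ncard_setOf_withSides (P : Finset (Fin (n + 2) × Fin (n + 2)) → Prop) [DecidablePred P] :
    {t : Triangulation n | P (withSides t)}.ncard =
      #{X ∈ triangulationsContaining univ ∅ | P X} := by
  rw [← Set.ncard_image_of_injective _ withSides_injective, ← Set.ncard_coe_finset]
  congr 1
  ext X
  simp only [Set.mem_image, Set.mem_ofPred_eq, coe_filter, mem_triangulationsContaining,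
    empty_subset, and_true]
  constructor
  · rintro ⟨t, ht, rfl⟩
    exact ⟨isChordTriangulation_withSides t, ht⟩
  · rintro ⟨hX, hP⟩
    obtain ⟨t, rfl⟩ := exists_withSides_eq hX
    exact ⟨t, hP, rfl⟩

end Bridge

section Decay

/-- The function `x ↦ x ^ (-3 / 2)` on `x > 0`, the polynomial factor in the growth of the Catalan
numbers. -/
noncomputable def decay (x : ℝ) : ℝ := 1 / √x ^ 3

lemma decay_nonneg (x : ℝ) : 0 ≤ decay x := by unfold decay; positivity

lemma decay_le_decay {x y : ℝ} (hx : 0 < x) (hxy : x ≤ y) : decay y ≤ decay x := by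
  unfold decay
  gcongr

lemma decay_sq {x : ℝ} (hx : 0 ≤ x) : decay x ^ 2 = 1 / x ^ 3 := by
  rw [decay, div_pow, one_pow, pow_right_comm, Real.sq_sqrt hx]

lemma succ_succ_mul_catalan_succ (k : ℕ) :
    (k + 2) * catalan (k + 1) = 2 * (2 * k + 1) * catalan k := by
  refine Nat.eq_of_mul_eq_mul_left k.succ_pos ?_
  calc (k + 1) * ((k + 2) * catalan (k + 1))
      = (k + 1) * (k + 1).centralBinom := by rw [← succ_mul_catalan_eq_centralBinom]
    _ = 2 * (2 * k + 1) * k.centralBinom := k.succ_mul_centralBinom_succ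
    _ = (k + 1) * (2 * (2 * k + 1) * catalan k) := by
      rw [← succ_mul_catalan_eq_centralBinom]; ring

lemma catalan_sq_mul_le (k : ℕ) : catalan k ^ 2 * (k + 1) ^ 3 ≤ 16 ^ k := by
  induction k with
  | zero => simp
  | succ k ih =>
    calc catalan (k + 1) ^ 2 * (k + 1 + 1) ^ 3
        = ((k + 2) * catalan (k + 1)) ^ 2 * (k + 2) := by ring
      _ = 4 * catalan k ^ 2 * ((2 * k + 1) ^ 2 * (k + 2)) := by
        rw [succ_succ_mul_catalan_succ]; ring
      _ ≤ 4 * catalan k ^ 2 * (4 * (k + 1) ^ 3) := Nat.mul_le_mul_left _ (by nlinarith)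
      _ = 16 * (catalan k ^ 2 * (k + 1) ^ 3) := by ring
      _ ≤ 16 * 16 ^ k := by gcongr
      _ = 16 ^ (k + 1) := by ring

lemma le_catalan_succ_sq_mul (k : ℕ) :
    16 ^ (k + 1) ≤ 4 * catalan (k + 1) ^ 2 * ((k + 1) * (k + 2) ^ 2) := by
  induction k with
  | zero => simp
  | succ k ih =>
    calc 16 ^ (k + 1 + 1) = 16 * 16 ^ (k + 1) := by ring
      _ ≤ 16 * (4 * catalan (k + 1) ^ 2 * ((k + 1) * (k + 2) ^ 2)) := by gcongr
      _ = 16 * catalan (k + 1) ^ 2 * (k + 2) * (4 * (k + 1) * (k + 2)) := by ring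
      _ ≤ 16 * catalan (k + 1) ^ 2 * (k + 2) * (2 * (k + 1) + 1) ^ 2 := by gcongr; nlinarith
      _ = 4 * (2 * (2 * (k + 1) + 1) * catalan (k + 1)) ^ 2 * (k + 2) := by ring
      _ = 4 * ((k + 1 + 2) * catalan (k + 1 + 1)) ^ 2 * (k + 2) := by
        rw [← succ_succ_mul_catalan_succ]
      _ = 4 * catalan (k + 1 + 1) ^ 2 * ((k + 1 + 1) * (k + 1 + 2) ^ 2) := by ring

theorem catalan_le_pow_mul_decay (k : ℕ) : (catalan k : ℝ) ≤ 4 ^ k * decay (k + 1) := by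
  refine le_of_sq_le_sq ?_ (mul_nonneg (by positivity) (decay_nonneg _))
  rw [mul_pow, decay_sq (by positivity), mul_one_div, le_div_iff₀ (by positivity), ← pow_mul,
    mul_comm k, pow_mul]
  exact_mod_cast catalan_sq_mul_le k

theorem pow_mul_decay_le_catalan (k : ℕ) : 4 ^ k / 2 * decay (k + 1) ≤ (catalan k : ℝ) := by
  have h : 16 ^ k ≤ 4 * catalan k ^ 2 * (k + 1) ^ 3 := by
    cases k with
    | zero => simp
    | succ k =>
      exact (le_catalan_succ_sq_mul k).trans (Nat.mul_le_mul_left _ (by nlinarith))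
  refine le_of_sq_le_sq ?_ (by positivity)
  rw [mul_pow, decay_sq (by positivity), mul_one_div, div_le_iff₀ (by positivity), div_pow,
    ← pow_mul, mul_comm k, pow_mul, div_le_iff₀ (by positivity)]
  have h' : (16 : ℝ) ^ k ≤ 4 * catalan k ^ 2 * (k + 1) ^ 3 := by exact_mod_cast h
  norm_num
  linarith

lemma inv_sqrt_succ_le (t : ℝ) (ht : 0 ≤ t) : 1 / √(t + 1) ≤ 2 * (√(t + 1) - √t) := by
  have hsq := Real.sq_sqrt ht
  have hsq' := Real.sq_sqrt (show 0 ≤ t + 1 by positivity)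
  have hpos : 0 < √(t + 1) := by positivity
  rw [div_le_iff₀ hpos]
  nlinarith [sq_nonneg (√(t + 1) - √t)]

lemma decay_le_sub (t : ℝ) (ht : 1 ≤ t) : decay t ≤ 4 * (1 / √t - 1 / √(t + 1)) := by
  have hsq := Real.sq_sqrt (show 0 ≤ t by positivity)
  have hsq' := Real.sq_sqrt (show 0 ≤ t + 1 by positivity)
  have : 0 < √t := by positivity
  have : 0 < √(t + 1) := by positivity
  have hle : √(t + 1) ≤ 3 / 2 * √t := by
    refine Real.sqrt_le_iff.2 ⟨by positivity, ?_⟩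
    rw [mul_pow, hsq]
    linarith
  have hdiff : 1 / √t - 1 / √(t + 1) = 1 / (√t * √(t + 1) * (√t + √(t + 1))) := by
    field_simp
    nlinarith
  rw [hdiff, decay, mul_one_div, div_le_div_iff₀ (by positivity) (by positivity)]
  calc 1 * (√t * √(t + 1) * (√t + √(t + 1)))
      ≤ 1 * (√t * (3 / 2 * √t) * (√t + 3 / 2 * √t)) := by gcongr
    _ = 15 / 4 * √t ^ 3 := by ring
    _ ≤ 4 * √t ^ 3 := by gcongr; norm_num

variable {ι κ : Type*} {A : Finset ι} {B : Finset κ} {M s : ℕ}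

lemma sum_decay_le_of_injOn {f : κ → ℕ} (hf : Set.InjOn f B) (hs : 0 < s)
    (hsf : ∀ b ∈ B, s ≤ f b) : ∑ b ∈ B, decay (f b) ≤ 4 / √s := by
  have htel : ∀ N, s ≤ N → ∑ t ∈ Ico s N, decay t ≤ 4 * (1 / √s - 1 / √N) := by
    intro N hN
    induction N, hN using Nat.le_induction with
    | base => simp
    | succ N hN ih =>
      have := decay_le_sub N (by exact_mod_cast hs.trans_le hN)
      rw [sum_Ico_succ_top hN, Nat.cast_succ]
      linarith
  calc ∑ b ∈ B, decay (f b)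
      = ∑ t ∈ B.image f, decay t := (sum_image (f := fun t : ℕ => decay t) hf).symm
    _ ≤ ∑ t ∈ Ico s (s + B.sup f + 1), decay t := by
      refine sum_le_sum_of_subset_of_nonneg ?_ fun _ _ _ => decay_nonneg _
      intro t ht
      obtain ⟨b, hb, rfl⟩ := mem_image.1 ht
      have := le_sup (f := f) hb
      exact mem_Ico.2 ⟨hsf b hb, by omega⟩
    _ ≤ 4 * (1 / √s - 1 / √(s + B.sup f + 1 : ℕ)) := htel _ (by omega)
    _ ≤ 4 * (1 / √s) := by
      gcongr
      exact sub_le_self _ (by positivity)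
    _ = 4 / √s := by ring

lemma sum_one_div_sqrt_le_of_injOn {r : ι → ℕ} (hr : Set.InjOn r A) (hr_pos : ∀ a ∈ A, 0 < r a)
    (hrM : ∀ a ∈ A, r a ≤ M) : ∑ a ∈ A, 1 / √(r a) ≤ 2 * √M := by
  have htel : ∀ N : ℕ, ∑ t ∈ range N, 1 / √(t + 1) ≤ 2 * √N := by
    intro N
    induction N with
    | zero => simp
    | succ N ih =>
      have := inv_sqrt_succ_le N (by positivity)
      rw [sum_range_succ, Nat.cast_succ]
      linarith
  calc ∑ a ∈ A, 1 / √(r a)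
      = ∑ t ∈ A.image r, 1 / √t := (sum_image (f := fun t : ℕ => 1 / √(t : ℝ)) hr).symm
    _ ≤ ∑ t ∈ Ico 1 (M + 1), 1 / √t := by
      refine sum_le_sum_of_subset_of_nonneg ?_ fun _ _ _ => by positivity
      intro t ht
      obtain ⟨a, ha, rfl⟩ := mem_image.1 ht
      exact mem_Ico.2 ⟨hr_pos a ha, Nat.lt_succ_of_le (hrM a ha)⟩
    _ = ∑ t ∈ range M, 1 / √(t + 1) := by
      rw [sum_Ico_eq_sum_range]
      exact sum_congr rfl fun t _ => by rw [Nat.cast_add, Nat.cast_one, add_comm]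
    _ ≤ 2 * √M := htel M

theorem sum_sum_decay_le {r : ι → ℕ} {L : ι → κ → ℕ} (hr : Set.InjOn r A)
    (hr_pos : ∀ a ∈ A, 0 < r a) (hrM : ∀ a ∈ A, r a ≤ M) (hL : ∀ a ∈ A, Set.InjOn (L a) B)
    (hrL : ∀ a ∈ A, ∀ b ∈ B, r a ≤ L a b) : ∑ a ∈ A, ∑ b ∈ B, decay (L a b) ≤ 8 * √M :=
  calc ∑ a ∈ A, ∑ b ∈ B, decay (L a b)
      ≤ ∑ a ∈ A, 4 / √(r a) :=
        sum_le_sum fun a ha => sum_decay_le_of_injOn (hL a ha) (hr_pos a ha) (hrL a ha)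
    _ = 4 * ∑ a ∈ A, 1 / √(r a) := by
      rw [mul_sum]
      exact sum_congr rfl fun a _ => by ring
    _ ≤ 4 * (2 * √M) := by gcongr; exact sum_one_div_sqrt_le_of_injOn hr hr_pos hrM
    _ = 8 * √M := by ring

lemma decay_mul_decay_le {m x y : ℝ} (hm : 0 < m) (hx : m / 2 ≤ x) (hy : m / 2 ≤ y) :
    decay x * decay y ≤ 8 / m ^ 3 :=
  calc decay x * decay y
      ≤ decay (m / 2) * decay (m / 2) :=
        mul_le_mul (decay_le_decay (by positivity) hx) (decay_le_decay (by positivity) hy)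
          (decay_nonneg _) (decay_nonneg _)
    _ = 8 / m ^ 3 := by
      rw [← sq, decay_sq (by positivity)]
      field_simp
      norm_num

/-- If adjacent gaps add up to at least `m`, then in one of the two pairs of opposite gaps both are
at least `m / 2`. -/
theorem prod_decay_le {m a b c d : ℝ} (hm : 0 < m) (hab : m ≤ a + b) (hbc : m ≤ b + c)
    (hcd : m ≤ c + d) (hda : m ≤ d + a) :
    decay a * decay b * decay c * decay d ≤
      8 / m ^ 3 * (decay a * decay c + decay b * decay d) := by
  have hac_nonneg := mul_nonneg (decay_nonneg a) (decay_nonneg c)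
  have hbd_nonneg := mul_nonneg (decay_nonneg b) (decay_nonneg d)
  have hm3 : 0 ≤ 8 / m ^ 3 := by positivity
  by_cases hac : m / 2 ≤ a ∧ m / 2 ≤ c
  · nlinarith [decay_mul_decay_le hm hac.1 hac.2, mul_nonneg hm3 hac_nonneg]
  · have hbd : m / 2 ≤ b ∧ m / 2 ≤ d := by
      rcases not_and_or.1 hac with h | h <;> constructor <;> linarith
    nlinarith [decay_mul_decay_le hm hbd.1 hbd.2, mul_nonneg hm3 hbd_nonneg]

end Decay

section Counting

variable {m n : ℕ} {u v w i p j q k : Fin (n + 2)}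

/-- The thresholds `u`, `v`, `w` cut the vertices `0, …, n + 1` into four consecutive blocks with at
least `m` vertices each. -/
structure HasLargeBlocks (m : ℕ) (u v w : Fin (n + 2)) : Prop where
  le_first : m ≤ u
  add_le_second : u + m ≤ v
  add_le_third : v + m ≤ w
  add_le_card : w + m ≤ n + 2

lemma ncard_edgeBoundary_joinsBlocks_le (huv : u < v) :
    (edgeBoundary (assocGraph n) {t | JoinsBlocks u v w (withSides t)}).ncard ≤
      ∑ i ∈ Iio u, ∑ p ∈ Ico u v, ∑ j ∈ Ico v w, ∑ q ∈ Ici w,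
        #(triangulationsContaining univ (quad i p j q)) := by
  let F := (Iio u ×ˢ Ico u v ×ˢ Ico v w ×ˢ Ici w).sigma fun t =>
    triangulationsContaining univ (quad t.1 t.2.1 t.2.2.1 t.2.2.2)
  let flip : (_ : Fin (n + 2) × Fin (n + 2) × Fin (n + 2) × Fin (n + 2)) ×
      Finset (Fin (n + 2) × Fin (n + 2)) → Sym2 (Finset (Fin (n + 2) × Fin (n + 2))) :=
    fun x => s(x.2, insert (x.1.2.1, x.1.2.2.2) (x.2.erase (x.1.1, x.1.2.2.1)))
  calc (edgeBoundary (assocGraph n) {t | JoinsBlocks u v w (withSides t)}).ncard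
      = (Sym2.map withSides ''
          edgeBoundary (assocGraph n) {t | JoinsBlocks u v w (withSides t)}).ncard :=
        (Set.ncard_image_of_injective _ (Sym2.map.injective withSides_injective)).symm
    _ ≤ (F.image flip : Set (Sym2 (Finset (Fin (n + 2) × Fin (n + 2))))).ncard := by
      refine Set.ncard_le_ncard ?_ (finite_toSet _)
      rintro _ ⟨_, ⟨hadj, s, t, rfl, hs, ht⟩, rfl⟩
      obtain ⟨hst, hts⟩ := (assocGraph n).mem_edgeSet.1 hadj
      rw [← card_withSides_sdiff] at hst hts
      obtain ⟨i, p, j, q, hi, hp, hj, hq, hquad, hflip⟩ :=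
        exists_quad_subset_of_joinsBlocks (isChordTriangulation_withSides s)
          (isChordTriangulation_withSides t) hst hts hs ht (mem_univ u) (mem_univ w) huv
      refine mem_coe.2 (mem_image.2 ⟨⟨(i, p, j, q), withSides s⟩, ?_, ?_⟩)
      · simp [F, mem_triangulationsContaining, *, isChordTriangulation_withSides]
      · rw [Sym2.map_mk, hflip]
    _ ≤ #F := by rw [Set.ncard_coe_finset]; exact card_image_le
    _ = _ := by simp only [F, card_sigma, sum_product]

lemma card_triangulationsContaining_quad_le (h : HasLargeBlocks m u v w) (hm : 0 < m)
    (hi : i ∈ Iio u) (hp : p ∈ Ico u v) (hj : j ∈ Ico v w) (hq : q ∈ Ici w) :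
    (#(triangulationsContaining univ (quad i p j q)) : ℝ) ≤
      4 ^ (n - 2) * (8 / m ^ 3 * (decay (p - i : ℕ) * decay (q - j : ℕ) +
        decay (j - p : ℕ) * decay (n + 2 - (q - i) : ℕ))) := by
  obtain ⟨hu, huv, hvw, hw⟩ := h
  rw [mem_Iio] at hi
  rw [mem_Ico] at hp hj
  rw [mem_Ici] at hq
  rw [card_triangulationsContaining_quad_univ (hi.trans_le hp.1) (hp.2.trans_le hj.1)
    (hj.2.trans_le hq)]
  simp only [Fin.lt_def, Fin.le_def] at hi hp hj hq
  obtain ⟨a, ha⟩ : ∃ a : ℕ, (p - i : ℕ) = a + 1 := Nat.exists_eq_add_one.2 (by omega)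
  obtain ⟨b, hb⟩ : ∃ b : ℕ, (j - p : ℕ) = b + 1 := Nat.exists_eq_add_one.2 (by omega)
  obtain ⟨c, hc⟩ : ∃ c : ℕ, (q - j : ℕ) = c + 1 := Nat.exists_eq_add_one.2 (by omega)
  obtain ⟨d, hd⟩ : ∃ d : ℕ, (n + 2 - (q - i) : ℕ) = d + 1 := Nat.exists_eq_add_one.2 (by omega)
  rw [ha, hb, hc, hd]
  have hsum : n - 2 = a + b + c + d := by omega
  have hab : (m : ℝ) ≤ (a + 1) + (b + 1) := by exact_mod_cast (by omega : m ≤ a + 1 + (b + 1))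
  have hbc : (m : ℝ) ≤ (b + 1) + (c + 1) := by exact_mod_cast (by omega : m ≤ b + 1 + (c + 1))
  have hcd : (m : ℝ) ≤ (c + 1) + (d + 1) := by exact_mod_cast (by omega : m ≤ c + 1 + (d + 1))
  have hda : (m : ℝ) ≤ (d + 1) + (a + 1) := by exact_mod_cast (by omega : m ≤ d + 1 + (a + 1))
  push_cast
  calc (catalan a * catalan b * catalan c * catalan d : ℝ)
      ≤ (4 ^ a * decay (a + 1)) * (4 ^ b * decay (b + 1)) * (4 ^ c * decay (c + 1)) *
          (4 ^ d * decay (d + 1)) := by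
        have := decay_nonneg (a + 1)
        have := decay_nonneg (b + 1)
        have := decay_nonneg (c + 1)
        have := decay_nonneg (d + 1)
        gcongr <;> apply catalan_le_pow_mul_decay
    _ = 4 ^ (n - 2) * (decay (a + 1) * decay (b + 1) * decay (c + 1) * decay (d + 1)) := by
        rw [hsum]; ring
    _ ≤ _ := by
        gcongr ?_ * ?_
        exact prod_decay_le (by exact_mod_cast hm) hab hbc hcd hda

lemma sum_sum_decay_sub_le {A B : Finset (Fin (n + 2))} (hA : ∀ a ∈ A, a < k)
    (hB : ∀ b ∈ B, k ≤ b) : ∑ a ∈ A, ∑ b ∈ B, decay (b - a : ℕ) ≤ 8 * √(n + 2) := by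
  simp only [Fin.lt_def, Fin.le_def] at hA hB
  have h := sum_sum_decay_le (A := A) (B := B) (M := n + 2) (r := fun a => k - a)
    (L := fun a b => b - a) ?_ ?_ ?_ ?_ ?_
  · exact_mod_cast h
  · intro a ha a' ha' haa'
    have := hA a ha
    have := hA a' ha'
    simp only at haa'
    omega
  · intro a ha
    have := hA a ha
    omega
  · intro a _
    omega
  · intro a ha b hb b' hb' hbb'
    have := hA a ha
    have := hB b hb
    have := hB b' hb'
    simp only at hbb'
    omega
  · intro a _ b hb
    have := hB b hb
    omega

lemma sum_sum_decay_card_sub_le {A B : Finset (Fin (n + 2))} (hAB : ∀ a ∈ A, ∀ b ∈ B, a ≤ b) :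
    ∑ a ∈ A, ∑ b ∈ B, decay (n + 2 - (b - a) : ℕ) ≤ 8 * √(n + 2) := by
  simp only [Fin.le_def] at hAB
  have h := sum_sum_decay_le (A := A) (B := B) (M := n + 2) (r := fun a => a + 1)
    (L := fun a b => n + 2 - (b - a)) ?_ ?_ ?_ ?_ ?_
  · exact_mod_cast h
  · intro a _ a' _ haa'
    simp only at haa'
    omega
  · intro a _
    omega
  · intro a _
    omega
  · intro a ha b hb b' hb' hbb'
    have := hAB a ha b hb
    have := hAB a ha b' hb'
    simp only at hbb'
    omega
  · intro a ha b hb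
    have := hAB a ha b hb
    omega

theorem ncard_edgeBoundary_joinsBlocks_le_pow (h : HasLargeBlocks m u v w) (hm : 0 < m) :
    ((edgeBoundary (assocGraph n) {t | JoinsBlocks u v w (withSides t)}).ncard : ℝ) ≤
      4 ^ (n - 2) * (8 / m ^ 3 * (128 * (n + 2))) := by
  have huv : u < v := Fin.lt_def.2 (by have := h.add_le_second; omega)
  have hvw : v < w := Fin.lt_def.2 (by have := h.add_le_third; omega)
  have hip : ∑ i ∈ Iio u, ∑ p ∈ Ico u v, decay (p - i : ℕ) ≤ 8 * √(n + 2) :=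
    sum_sum_decay_sub_le (k := u) (by simp) (by simp +contextual)
  have hjq : ∑ j ∈ Ico v w, ∑ q ∈ Ici w, decay (q - j : ℕ) ≤ 8 * √(n + 2) :=
    sum_sum_decay_sub_le (k := w) (by simp) (by simp)
  have hpj : ∑ p ∈ Ico u v, ∑ j ∈ Ico v w, decay (j - p : ℕ) ≤ 8 * √(n + 2) :=
    sum_sum_decay_sub_le (k := v) (by simp) (by simp +contextual)
  have hiq : ∑ i ∈ Iio u, ∑ q ∈ Ici w, decay (n + 2 - (q - i) : ℕ) ≤ 8 * √(n + 2) :=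
    sum_sum_decay_card_sub_le fun i hi q hq =>
      ((mem_Iio.1 hi).trans (huv.trans hvw)).le.trans (mem_Ici.1 hq)
  have hnonneg : ∀ (A B : Finset (Fin (n + 2))) (f : Fin (n + 2) → Fin (n + 2) → ℕ),
      0 ≤ ∑ a ∈ A, ∑ b ∈ B, decay (f a b) := fun A B f =>
    sum_nonneg fun _ _ => sum_nonneg fun _ _ => decay_nonneg _
  calc ((edgeBoundary (assocGraph n) {t | JoinsBlocks u v w (withSides t)}).ncard : ℝ)
      ≤ ∑ i ∈ Iio u, ∑ p ∈ Ico u v, ∑ j ∈ Ico v w, ∑ q ∈ Ici w,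
          (#(triangulationsContaining univ (quad i p j q)) : ℝ) := by
        exact_mod_cast ncard_edgeBoundary_joinsBlocks_le huv
    _ ≤ ∑ i ∈ Iio u, ∑ p ∈ Ico u v, ∑ j ∈ Ico v w, ∑ q ∈ Ici w,
          4 ^ (n - 2) * (8 / m ^ 3 * (decay (p - i : ℕ) * decay (q - j : ℕ) +
            decay (j - p : ℕ) * decay (n + 2 - (q - i) : ℕ))) :=
        sum_le_sum fun i hi => sum_le_sum fun p hp => sum_le_sum fun j hj => sum_le_sum fun q hq =>
          card_triangulationsContaining_quad_le h hm hi hp hj hq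
    _ = 4 ^ (n - 2) * (8 / m ^ 3 *
          ((∑ i ∈ Iio u, ∑ p ∈ Ico u v, decay (p - i : ℕ)) *
              (∑ j ∈ Ico v w, ∑ q ∈ Ici w, decay (q - j : ℕ)) +
            (∑ p ∈ Ico u v, ∑ j ∈ Ico v w, decay (j - p : ℕ)) *
              ∑ i ∈ Iio u, ∑ q ∈ Ici w, decay (n + 2 - (q - i) : ℕ))) := by
        simp only [← mul_sum, ← sum_mul, sum_add_distrib]
    _ ≤ 4 ^ (n - 2) * (8 / m ^ 3 * ((8 * √(n + 2)) * (8 * √(n + 2)) +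
          (8 * √(n + 2)) * (8 * √(n + 2)))) := by
        gcongr <;> apply hnonneg
    _ = 4 ^ (n - 2) * (8 / m ^ 3 * (128 * √(n + 2) ^ 2)) := by ring
    _ = 4 ^ (n - 2) * (8 / m ^ 3 * (128 * (n + 2))) := by rw [Real.sq_sqrt (by positivity)]

lemma pow_mul_decay_le_card_triangulationsContaining_triangle (hij : i < j) (hjk : j < k) :
    4 ^ (n - 1) / 8 * decay (n + 2) ^ 3 ≤
      (#(triangulationsContaining univ (triangle i j k)) : ℝ) := by
  rw [card_triangulationsContaining_triangle_univ hij hjk]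
  rw [Fin.lt_def] at hij hjk
  obtain ⟨a, ha⟩ : ∃ a : ℕ, (j - i : ℕ) = a + 1 := Nat.exists_eq_add_one.2 (by omega)
  obtain ⟨b, hb⟩ : ∃ b : ℕ, (k - j : ℕ) = b + 1 := Nat.exists_eq_add_one.2 (by omega)
  obtain ⟨c, hc⟩ : ∃ c : ℕ, (n + 2 - (k - i) : ℕ) = c + 1 := Nat.exists_eq_add_one.2 (by omega)
  have hsum : n - 1 = a + b + c := by omega
  have hle : ∀ x : ℕ, x ≤ n + 1 → 4 ^ x / 2 * decay (n + 2) ≤ (catalan x : ℝ) := fun x hx =>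
    (mul_le_mul_of_nonneg_left (decay_le_decay (by positivity) (by
      have : (x : ℝ) ≤ n + 1 := by exact_mod_cast hx
      linarith)) (by positivity)).trans (pow_mul_decay_le_catalan x)
  rw [ha, hb, hc, hsum]
  push_cast
  calc 4 ^ (a + b + c) / 8 * decay (n + 2) ^ 3
      = (4 ^ a / 2 * decay (n + 2)) * (4 ^ b / 2 * decay (n + 2)) *
          (4 ^ c / 2 * decay (n + 2)) := by ring
    _ ≤ catalan a * catalan b * catalan c := by
      have := decay_nonneg (n + 2)
      have ha_le := hle a (by omega)
      have hb_le := hle b (by omega)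
      have hc_le := hle c (by omega)
      gcongr

open Classical in
lemma card_mul_le_ncard_of_triangle_subset {I J K : Finset (Fin (n + 2))}
    (hIJ : ∀ i ∈ I, ∀ j ∈ J, i < j) (hJK : ∀ j ∈ J, ∀ k ∈ K, j < k)
    {P : Finset (Fin (n + 2) × Fin (n + 2)) → Prop}
    (hP : ∀ i ∈ I, ∀ j ∈ J, ∀ k ∈ K, ∀ X, IsChordTriangulation univ X → triangle i j k ⊆ X → P X) :
    #I * #J * #K * (4 ^ (n - 1) / 8 * decay (n + 2) ^ 3) ≤
      ({t : Triangulation n | P (withSides t)}.ncard : ℝ) := by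
  rw [ncard_setOf_withSides]
  calc #I * #J * #K * (4 ^ (n - 1) / 8 * decay (n + 2) ^ 3)
      = ∑ t ∈ I ×ˢ J ×ˢ K, 4 ^ (n - 1) / 8 * decay (n + 2) ^ 3 := by
        simp [card_product, mul_assoc]
    _ ≤ ∑ t ∈ I ×ˢ J ×ˢ K, (#(triangulationsContaining univ (triangle t.1 t.2.1 t.2.2)) : ℝ) := by
        refine sum_le_sum fun t ht => ?_
        simp only [mem_product] at ht
        exact pow_mul_decay_le_card_triangulationsContaining_triangle (hIJ _ ht.1 _ ht.2.1)
          (hJK _ ht.2.1 _ ht.2.2)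
    _ = #((I ×ˢ J ×ˢ K).biUnion fun t =>
          triangulationsContaining univ (triangle t.1 t.2.1 t.2.2)) := by
        rw [card_biUnion (pairwiseDisjoint_triangulationsContaining_triangle hIJ hJK)]
        push_cast
        rfl
    _ ≤ _ := by
        refine Nat.cast_le.2 (card_le_card fun X hX => ?_)
        simp only [mem_biUnion, mem_product, mem_triangulationsContaining] at hX
        obtain ⟨t, ht, hX, htX⟩ := hX
        exact mem_filter.2 ⟨mem_triangulationsContaining.2 ⟨hX, empty_subset _⟩,
          hP _ ht.1 _ ht.2.1 _ ht.2.2 X hX htX⟩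

end Counting

section Expansion

lemma edgeBoundary_compl {V : Type*} (G : SimpleGraph V) (S : Set V) :
    edgeBoundary G Sᶜ = edgeBoundary G S := by
  ext e
  refine and_congr_right fun _ => ⟨?_, ?_⟩
  · rintro ⟨a, b, rfl, ha, hb⟩
    exact ⟨b, a, Sym2.eq_swap, not_not.1 hb, ha⟩
  · rintro ⟨a, b, rfl, ha, hb⟩
    exact ⟨b, a, Sym2.eq_swap, hb, not_not.2 ha⟩

theorem exists_ncard_edgeBoundary_le {V : Type*} [Finite V] (G : SimpleGraph V) {S : Set V}
    {c h : ℝ} (hc : 0 < c) (hh : 0 ≤ h) (hS : c ≤ S.ncard) (hSc : c ≤ Sᶜ.ncard)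
    (hbdry : (edgeBoundary G S).ncard ≤ h * c) :
    ∃ S' : Set V, S'.Nonempty ∧ 2 * S'.ncard ≤ Nat.card V ∧
      (edgeBoundary G S').ncard ≤ h * S'.ncard := by
  have hadd := S.ncard_add_ncard_compl
  have hnonempty : ∀ A : Set V, c ≤ A.ncard → A.Nonempty := fun A hA =>
    (Set.ncard_pos A.toFinite).1 (by exact_mod_cast hc.trans_le hA)
  rcases le_total S.ncard Sᶜ.ncard with hle | hle
  · exact ⟨S, hnonempty S hS, by omega, hbdry.trans (by gcongr)⟩
  · exact ⟨Sᶜ, hnonempty _ hSc, by omega, by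
      rw [edgeBoundary_compl]; exact hbdry.trans (by gcongr)⟩

variable {m n : ℕ} {u v w : Fin (n + 2)}

theorem le_ncard_joinsBlocks (h : HasLargeBlocks m u v w) :
    m ^ 3 * (4 ^ (n - 1) / 8 * decay (n + 2) ^ 3) ≤
      ({t : Triangulation n | JoinsBlocks u v w (withSides t)}.ncard : ℝ) := by
  obtain ⟨hu, huv, hvw, hw⟩ := h
  refine le_trans ?_ (card_mul_le_ncard_of_triangle_subset (I := Iio u) (J := Ico v w)
    (K := Ici w) ?_ ?_ ?_)
  · have := decay_nonneg (n + 2)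
    rw [pow_three', Fin.card_Iio, Fin.card_Ico, Fin.card_Ici]
    gcongr <;> omega
  · simp only [mem_Iio, mem_Ico, Fin.lt_def, Fin.le_def]
    omega
  · simp only [mem_Ici, mem_Ico, Fin.lt_def, Fin.le_def]
    omega
  · intro i hi j hj k _ X _ hX
    rw [mem_Ico] at hj
    exact ⟨i, j, mem_Iio.1 hi, hj.1, hj.2, (triangle_subset.1 hX).1⟩

theorem le_ncard_compl_joinsBlocks (h : HasLargeBlocks m u v w) :
    m ^ 3 * (4 ^ (n - 1) / 8 * decay (n + 2) ^ 3) ≤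
      ({t : Triangulation n | JoinsBlocks u v w (withSides t)}ᶜ.ncard : ℝ) := by
  obtain ⟨hu, huv, hvw, hw⟩ := h
  refine le_trans ?_ (card_mul_le_ncard_of_triangle_subset (I := Iio u) (J := Ico u v)
    (K := Ici w) (P := fun X => ¬ JoinsBlocks u v w X) ?_ ?_ ?_)
  · have := decay_nonneg (n + 2)
    rw [pow_three', Fin.card_Iio, Fin.card_Ico, Fin.card_Ici]
    gcongr <;> omega
  · simp only [mem_Iio, mem_Ico, Fin.lt_def, Fin.le_def]
    omega
  · simp only [mem_Ici, mem_Ico, Fin.lt_def, Fin.le_def]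
    omega
  · rintro i - p hp q hq X hX hipq ⟨i', j', hi', hvj', hj'w, hij'⟩
    rw [mem_Ico] at hp
    exact hX.not_interlace hij' (triangle_subset.1 hipq).2.1 <|
      Or.inl ⟨hi'.trans_le hp.1, hp.2.trans_le hvj', hj'w.trans_le (mem_Ici.1 hq)⟩

lemma exists_hasLargeBlocks (hmn : 4 * m ≤ n + 2) :
    ∃ u v w : Fin (n + 2), HasLargeBlocks m u v w :=
  ⟨⟨m, by omega⟩, ⟨2 * m, by omega⟩, ⟨3 * m, by omega⟩, le_rfl, by simp only; omega,
    by simp only; omega, by simp only; omega⟩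

lemma pow_mul_div_le (hn : 2 ≤ n) (hm : n + 2 ≤ 8 * m) :
    4 ^ (n - 2) * (8 / m ^ 3 * (128 * (n + 2))) ≤
      2 ^ 29 / √(n + 2) * (m ^ 3 * (4 ^ (n - 1) / 8 * decay (n + 2) ^ 3)) := by
  have hs_pos : 0 < √(n + 2 : ℝ) := by positivity
  have hs_sq : √(n + 2 : ℝ) ^ 2 = n + 2 := Real.sq_sqrt (by positivity)
  have hm' : (n + 2 : ℝ) ≤ 8 * m := by exact_mod_cast hm
  have hm_pos : (0 : ℝ) < m := by linarith [(n.cast_nonneg : (0 : ℝ) ≤ n)]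
  have hpow : (4 : ℝ) ^ (n - 1) = 4 * 4 ^ (n - 2) := by
    rw [← pow_succ']; congr 1; omega
  rw [decay, hpow, ← hs_sq, Real.sqrt_sq hs_pos.le]
  rw [← hs_sq] at hm'
  generalize √(n + 2 : ℝ) = s at *
  have hs12 : s ^ 12 ≤ 2 ^ 18 * (m : ℝ) ^ 6 :=
    calc s ^ 12 = (s ^ 2) ^ 6 := by ring
      _ ≤ (8 * m : ℝ) ^ 6 := by gcongr
      _ = 2 ^ 18 * (m : ℝ) ^ 6 := by ring
  calc 4 ^ (n - 2) * (8 / m ^ 3 * (128 * s ^ 2))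
      = 4 ^ (n - 2) * 2 ^ 10 / (m ^ 3 * s ^ 10) * s ^ 12 := by field_simp; norm_num
    _ ≤ 4 ^ (n - 2) * 2 ^ 10 / (m ^ 3 * s ^ 10) * (2 ^ 18 * m ^ 6) := by gcongr
    _ = 2 ^ 29 / s * (m ^ 3 * (4 * 4 ^ (n - 2) / 8 * (1 / s ^ 3) ^ 3)) := by
      field_simp; norm_num

end Expansion

end Associahedron

open Associahedron

/-- there is a constant `C > 0` such that for every `n ≥ 2` there is a
nonempty set `S` of triangulations of the convex `(n+2)`-gon with `2|S| ≤ |V(K_n)|`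
for which the number of edges of `K_n` with exactly one endpoint in `S` is at most
`C·|S|/√n`; i.e. the edge expansion of `K_n` is `O(1/√n)`. -/
theorem assocGraph_expansion_upper_bound :
    ∃ C : ℝ, 0 < C ∧ ∀ n : ℕ, 2 ≤ n → ∃ S : Set (Triangulation n),
      S.Nonempty ∧ 2 * S.ncard ≤ Nat.card (Triangulation n) ∧
      ((edgeBoundary (assocGraph n) S).ncard : ℝ) ≤ C * (S.ncard : ℝ) / Real.sqrt n := by
  refine ⟨2 ^ 29, by positivity, fun n hn => ?_⟩
  have hm : 0 < (n + 2) / 4 := by omega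
  obtain ⟨u, v, w, hblocks⟩ := exists_hasLargeBlocks (Nat.mul_div_le (n + 2) 4)
  have hpos : 0 < ((n + 2) / 4 : ℕ) ^ 3 * (4 ^ (n - 1) / 8 * decay (n + 2) ^ 3) := by
    unfold decay
    positivity
  have hbdry := (ncard_edgeBoundary_joinsBlocks_le_pow hblocks hm).trans
    (pow_mul_div_le hn (by omega))
  obtain ⟨S, hS, hcard, hSbdry⟩ := exists_ncard_edgeBoundary_le (assocGraph n) hpos (by positivity)
    (le_ncard_joinsBlocks hblocks) (le_ncard_compl_joinsBlocks hblocks) hbdry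
  refine ⟨S, hS, hcard, hSbdry.trans ?_⟩
  rw [div_mul_eq_mul_div]
  gcongr
  linarith
end

section
/- For every n ≥ 2 and all 1 ≤ p < q ≤ n, the boundary set ∂_{p,q} is exactly the set of triangulations in the oriented class Θ_{T_p} that contain the triangle with vertices {p, q, n+1}, and the subgraph of K_n induced by ∂_{p,q} is isomorphic to the Cartesian product K_{p−1} □ Θ', where Θ' is the oriented class, inside the flip graph K_{n−p} of the convex (n−p+2)-gon with vertices p, p+1, …, n+1 and special side {p, n+1}, consisting of the triangulations of that smaller polygon containing the triangle {p, q, n+1}. In particular ∂_{p,q} induces a product K_l □ (an oriented class of K_r) with l + r = n − 1. -/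
open Finset
open scoped Fin.NatCast

/-- `e` is an edge of the triangulation `t`: a side of the polygon or one of the
diagonals of `t`. -/
def EdgeOfT {n : ℕ} (t : Triangulation n) (e : Sym2 (Fin (n + 2))) : Prop :=
  IsSide e ∨ e ∈ t.val

/-- The triangle with vertices `a`, `b`, `c` is one of the `n` triangles of the
triangulation `t` (for pairwise non-crossing sets of diagonals this holds exactly
when all three chords are edges of `t`). -/
def IsTriangleOf {n : ℕ} (t : Triangulation n) (a b c : Fin (n + 2)) : Prop :=
  a ≠ b ∧ b ≠ c ∧ a ≠ c ∧ EdgeOfT t s(a, b) ∧ EdgeOfT t s(b, c) ∧ EdgeOfT t s(a, c)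

/-- The oriented class `Θ_{T_p}` (w.r.t. the special side `e* = {0, n+1}`): the set of
triangulations of the convex `(n+2)`-gon having the triangle `T_p = {0, p, n+1}` as one of
their triangles. -/
def orientedClass (n p : ℕ) : Set (Triangulation n) :=
  {t | IsTriangleOf t (0 : Fin (n + 2)) ((p : ℕ) : Fin (n + 2)) (((n + 1 : ℕ)) : Fin (n + 2))}

/-- The set `E_{p,q}` of edges of `K_n` with one endpoint in `Θ_{T_p}` and the other
in `Θ_{T_q}`. -/
def edgesBetween (n p q : ℕ) : Set (Sym2 (Triangulation n)) :=
  {e | e ∈ (assocGraph n).edgeSet ∧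
    ∃ u v : Triangulation n, e = s(u, v) ∧ u ∈ orientedClass n p ∧ v ∈ orientedClass n q}

/-- The boundary set `∂_{p,q}`: triangulations in `Θ_{T_p}` having a neighbor in
`Θ_{T_q}`. -/
def boundarySet (n p q : ℕ) : Set (Triangulation n) :=
  {t | t ∈ orientedClass n p ∧
    ∃ t' : Triangulation n, t' ∈ orientedClass n q ∧ (assocGraph n).Adj t t'}

theorem enat_add_eq_one_iff {m n : ℕ∞} : m + n = 1 ↔ m = 1 ∧ n = 0 ∨ m = 0 ∧ n = 1 := by
  induction m using ENat.recTopCoe with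
  | top => simp
  | coe m =>
    induction n using ENat.recTopCoe with
    | top => simp
    | coe n => norm_cast; omega

section Graph

variable {V V' W W' X : Type*} {G : SimpleGraph V} {G' : SimpleGraph V'} {H : SimpleGraph W}
  {H' : SimpleGraph W'} {K : SimpleGraph X}

/-- Isomorphisms of the factors give an isomorphism of Cartesian products. -/
def boxProdIso (e : G ≃g G') (f : H ≃g H') : G.boxProd H ≃g G'.boxProd H' where
  toEquiv := e.toEquiv.prodCongr f.toEquiv
  map_rel_iff' {x y} := by
    simp [SimpleGraph.boxProd_adj, Equiv.prodCongr_apply, e.map_adj_iff, f.map_adj_iff]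

/-- An isomorphism from the subgraph induced by `s` to a Cartesian product restricts to the part of
`s` that corresponds to a subset `t` of the second factor. -/
def induceIsoBoxProdInduce {s : Set V} (e : G.induce s ≃g H.boxProd K) (t : Set X) :
    G.induce {v | ∃ h : v ∈ s, (e ⟨v, h⟩).2 ∈ t} ≃g H.boxProd (K.induce t) where
  toFun v := ((e ⟨v.1, v.2.1⟩).1, ⟨(e ⟨v.1, v.2.1⟩).2, v.2.2⟩)
  invFun x := ⟨(e.symm (x.1, x.2.1)).1, (e.symm (x.1, x.2.1)).2, by simp⟩
  left_inv v := by simp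
  right_inv x := by simp
  map_rel_iff' {v w} := by
    have h := e.map_adj_iff (v := ⟨v.1, v.2.1⟩) (w := ⟨w.1, w.2.1⟩)
    simpa only [SimpleGraph.boxProd_adj, SimpleGraph.induce_adj, Equiv.coe_fn_mk,
      Subtype.ext_iff] using h

end Graph

/-!
Record a triangulation by the set of all its edges, sides included. The edges `ap` and `pb` of the
triangle `apb` on the side `ab` cut the polygon into two smaller ones, and a chord that crosses
neither of them lies in one of the two pieces or is `ab`; a flip that preserves the triangle is a
flip in exactly one piece, whence the product structure. A flip that changes the apex from `p` to
`q > p` has to exchange `pb` for `aq`, the two diagonals of the quadrilateral `apqb`, so it exists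
exactly when `pq` and `qb` are edges, that is, when the piece on `p, …, b` has its triangle on `pb`
at the apex `q`.
-/

section Chords

variable {α β : Type*} [LinearOrder α] [LinearOrder β] {U : Set α} {V : Set β} {a b c d p q : α}
  {x y : α × α}

/-- The chords, sides included, of the convex polygon whose vertices are the elements of `U` in
increasing order; a chord is encoded as the pair of its endpoints with the smaller one first. -/
def chords (U : Set α) : Set (α × α) :=
  {x | x.1 ∈ U ∧ x.2 ∈ U ∧ x.1 < x.2}

theorem chords_mono {W : Set α} (h : U ⊆ W) : chords U ⊆ chords W :=
  fun _ hx => ⟨h hx.1, h hx.2.1, hx.2.2⟩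

/-- Two chords cross when their endpoints strictly interleave. -/
def ChordCross (x y : α × α) : Prop :=
  (x.1 < y.1 ∧ y.1 < x.2 ∧ x.2 < y.2) ∨ (y.1 < x.1 ∧ x.1 < y.2 ∧ y.2 < x.2)

theorem ChordCross.symm (h : ChordCross x y) : ChordCross y x :=
  Or.symm h

theorem chordCross_map_iff (f : α ↪o β) :
    ChordCross (Prod.map f f x) (Prod.map f f y) ↔ ChordCross x y := by
  simp only [ChordCross, Prod.map_fst, Prod.map_snd, f.lt_iff_lt]

theorem not_chordCross_endpoints (hx : x ∈ chords (Set.Icc a b)) : ¬ ChordCross (a, b) x := by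
  grind [chords, ChordCross]

theorem mem_chords_Icc_of_chordCross (hx : x ∈ chords (Set.Icc c d)) (hy : y.1 < y.2)
    (hxy : ChordCross x y) (h : ¬ ChordCross (c, d) y) : y ∈ chords (Set.Icc c d) := by
  grind [chords, ChordCross]

theorem mem_chords_Icc_split (hx : x ∈ chords (Set.Icc a b)) (hl : ¬ ChordCross x (a, p))
    (hr : ¬ ChordCross x (p, b)) :
    x ∈ chords (Set.Icc a p) ∨ x ∈ chords (Set.Icc p b) ∨ x = (a, b) := by
  grind [chords, ChordCross]

theorem not_chordCross_of_split (hx : x ∈ chords (Set.Icc a p)) (hy : y ∈ chords (Set.Icc p b)) :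
    ¬ ChordCross x y := by
  grind [chords, ChordCross]

theorem disjoint_chords_Icc : Disjoint (chords (Set.Icc a p)) (chords (Set.Icc p b)) := by
  rw [Set.disjoint_left]
  grind [chords]

theorem not_chordCross_self : ¬ ChordCross x x := by
  grind [ChordCross]

theorem chords_eq_image (f : α ↪o β) (h : f '' U = V) :
    chords V = Prod.map f f '' chords U := by
  subst h
  ext ⟨i, j⟩
  constructor
  · rintro ⟨⟨i, hi, rfl⟩, ⟨j, hj, rfl⟩, hij⟩
    exact ⟨(i, j), ⟨hi, hj, f.lt_iff_lt.1 hij⟩, rfl⟩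
  · rintro ⟨x, ⟨hi, hj, hij⟩, h⟩
    obtain ⟨rfl, rfl⟩ := Prod.mk.inj h
    exact ⟨⟨_, hi, rfl⟩, ⟨_, hj, rfl⟩, f.lt_iff_lt.2 hij⟩

theorem chordCross_diagonals (hap : a < p) (hpq : p < q) (hqb : q < b) :
    ChordCross (a, q) (p, b) :=
  Or.inl ⟨hap, hpq, hqb⟩

theorem eq_of_chordCross_diagonal_left (hap : a < p) (hpq : p < q) (hqb : q < b) (hx : x.1 < x.2)
    (h₁ : ¬ ChordCross (a, p) x) (h₂ : ¬ ChordCross (p, q) x) (h₃ : ¬ ChordCross (q, b) x)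
    (h₄ : ¬ ChordCross (a, b) x) (h : ChordCross (a, q) x) : x = (p, b) := by
  grind [ChordCross]

theorem eq_of_chordCross_diagonal_right (hap : a < p) (hpq : p < q) (hqb : q < b)
    (h₁ : ¬ ChordCross (a, p) x) (h₂ : ¬ ChordCross (p, q) x) (h₃ : ¬ ChordCross (q, b) x)
    (h₄ : ¬ ChordCross (a, b) x) (h : ChordCross (p, b) x) : x = (a, q) := by
  grind [ChordCross]

theorem chordCross_diagonal_of_chordCross (hap : a < p) (hqb : q < b)
    (hx : x ∈ chords (Set.Icc a b)) (h : ChordCross (p, q) x) :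
    ChordCross (p, b) x ∨ ChordCross (a, q) x := by
  grind [ChordCross, chords]

/-- A triangulation of the convex polygon with vertex set `U`, encoded as the set of all its edges:
a maximal set of pairwise non-crossing chords. Sides cross no chord, so they always belong to it. -/
@[ext]
structure ChordTriangulation (U : Set α) where
  carrier : Set (α × α)
  mem_carrier_iff' : ∀ x, x ∈ carrier ↔ x ∈ chords U ∧ ∀ y ∈ carrier, ¬ ChordCross x y

namespace ChordTriangulation

instance : SetLike (ChordTriangulation U) (α × α) where
  coe := carrier
  coe_injective _ _ := ChordTriangulation.ext

variable {S T : ChordTriangulation U}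

theorem mem_iff : x ∈ S ↔ x ∈ chords U ∧ ∀ y ∈ S, ¬ ChordCross x y :=
  S.mem_carrier_iff' x

theorem mem_chords (hx : x ∈ S) : x ∈ chords U :=
  (mem_iff.1 hx).1

theorem not_chordCross (hx : x ∈ S) (hy : y ∈ S) : ¬ ChordCross x y :=
  (mem_iff.1 hx).2 y hy

theorem eq_of_subset (h : (S : Set (α × α)) ⊆ T) : S = T :=
  SetLike.coe_injective <| h.antisymm fun _ hx =>
    mem_iff.2 ⟨mem_chords hx, fun _ hy => not_chordCross hx (h hy)⟩

theorem encard_sdiff_eq_zero_iff : (S \ T : Set (α × α)).encard = 0 ↔ S = T := by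
  rw [Set.encard_eq_zero, Set.sdiff_eq_empty]
  exact ⟨eq_of_subset, fun h => h ▸ subset_rfl⟩

theorem endpoints_mem (S : ChordTriangulation (Set.Icc a b)) (hab : a < b) : (a, b) ∈ S :=
  mem_iff.2 ⟨⟨Set.left_mem_Icc.2 hab.le, Set.right_mem_Icc.2 hab.le, hab⟩,
    fun _ hy => not_chordCross_endpoints (mem_chords hy)⟩

/-- The flip graph of the polygon with vertex set `U`, the counterpart of `assocGraph`. -/
def flipGraph (U : Set α) : SimpleGraph (ChordTriangulation U) where
  Adj S T := (S \ T : Set (α × α)).encard = 1 ∧ (T \ S : Set (α × α)).encard = 1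
  symm := ⟨fun _ _ h => h.symm⟩
  loopless := ⟨fun _ h => by simp at h⟩

theorem flipGraph_adj : (flipGraph U).Adj S T ↔
    (S \ T : Set (α × α)).encard = 1 ∧ (T \ S : Set (α × α)).encard = 1 :=
  Iff.rfl

section Map

/-- The triangulation obtained by relabelling the vertices along `f`. -/
def map (f : α ↪o β) (h : f '' U = V) (S : ChordTriangulation U) : ChordTriangulation V where
  carrier := Prod.map f f '' S
  mem_carrier_iff' x := by
    rw [chords_eq_image f h, Set.forall_mem_image]
    constructor
    · rintro ⟨x, hx, rfl⟩
      exact ⟨⟨x, mem_chords hx, rfl⟩, fun y hy =>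
        (chordCross_map_iff f).not.2 (not_chordCross hx hy)⟩
    · rintro ⟨⟨x, hx, rfl⟩, hcross⟩
      exact ⟨x, mem_iff.2 ⟨hx, fun y hy => (chordCross_map_iff f).not.1 (hcross hy)⟩, rfl⟩

theorem mem_image_chords_of_mem {S : ChordTriangulation V} {x : β × β} (f : α ↪o β)
    (h : f '' U = V) (hx : x ∈ S) : x ∈ Prod.map f f '' chords U :=
  (chords_eq_image f h).subset (mem_chords hx)

/-- The triangulation obtained by pulling the labels of the vertices back along `f`. -/
def comap (f : α ↪o β) (h : f '' U = V) (S : ChordTriangulation V) : ChordTriangulation U where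
  carrier := Prod.map f f ⁻¹' S
  mem_carrier_iff' x := by
    rw [Set.mem_preimage, SetLike.mem_coe, mem_iff, chords_eq_image f h,
      (f.injective.prodMap f.injective).mem_set_image]
    refine and_congr_right fun _ => ⟨fun hx y hy => ?_, fun hx y hy => ?_⟩
    · exact (chordCross_map_iff f).not.1 (hx _ hy)
    · obtain ⟨y, -, rfl⟩ := mem_image_chords_of_mem f h hy
      exact (chordCross_map_iff f).not.2 (hx y hy)

/-- Relabelling the vertices along `f` is an isomorphism of flip graphs. -/
def flipGraphMapIso (f : α ↪o β) (h : f '' U = V) : flipGraph U ≃g flipGraph V where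
  toFun := map f h
  invFun := comap f h
  left_inv S := SetLike.coe_injective <|
    Set.preimage_image_eq _ (f.injective.prodMap f.injective)
  right_inv S := SetLike.coe_injective <| Set.image_preimage_eq_of_subset fun x hx =>
    Set.image_subset_range _ _ (mem_image_chords_of_mem f h hx)
  map_rel_iff' {S T} := by
    have hf : Function.Injective (Prod.map f f) := f.injective.prodMap f.injective
    have encard_sdiff (S T : ChordTriangulation U) :
        (map f h S \ map f h T : Set (β × β)).encard = (S \ T : Set (α × α)).encard := by
      rw [← hf.encard_image, Set.image_sdiff hf]
      rfl
    simp only [flipGraph_adj, Equiv.coe_fn_mk, encard_sdiff]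

theorem mem_flipGraphMapIso_iff (f : α ↪o β) (h : f '' U = V) {i j : α} :
    (f i, f j) ∈ flipGraphMapIso f h S ↔ (i, j) ∈ S :=
  (f.injective.prodMap f.injective).mem_set_image (s := (S : Set (α × α))) (a := (i, j))

end Map

section Flip

/-- The triangulation obtained by replacing the diagonal `pb` of the quadrilateral `apqb` by
`aq`. -/
def flip (S : ChordTriangulation U) (hap : (a, p) ∈ S) (hpq : (p, q) ∈ S) (hqb : (q, b) ∈ S)
    (hab : (a, b) ∈ S) : ChordTriangulation U where
  carrier := insert (a, q) (S \ {(p, b)})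
  mem_carrier_iff' x := by
    obtain ⟨ha, -, hap'⟩ := mem_chords hap
    obtain ⟨-, hq, hpq'⟩ := mem_chords hpq
    have hqb' : q < b := (mem_chords hqb).2.2
    have haq_chord : (a, q) ∈ chords U := ⟨ha, hq, hap'.trans hpq'⟩
    have haq : ∀ y ∈ (S \ {(p, b)} : Set (α × α)), ¬ ChordCross (a, q) y := fun y hy hcross =>
      hy.2 <| eq_of_chordCross_diagonal_left hap' hpq' hqb' (mem_chords hy.1).2.2
        (not_chordCross hap hy.1) (not_chordCross hpq hy.1) (not_chordCross hqb hy.1)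
        (not_chordCross hab hy.1) hcross
    constructor
    · rintro (rfl | hx)
      · exact ⟨haq_chord, Set.forall_mem_insert.2 ⟨not_chordCross_self, haq⟩⟩
      · exact ⟨mem_chords hx.1, Set.forall_mem_insert.2
          ⟨fun h => haq x hx h.symm, fun y hy => not_chordCross hx.1 hy.1⟩⟩
    · rintro ⟨hx, hcross⟩
      rw [Set.forall_mem_insert] at hcross
      obtain ⟨hxaq, hcross⟩ := hcross
      by_cases hxpb : ChordCross (p, b) x
      · have hside : ∀ y ∈ S, y ≠ (p, b) → ¬ ChordCross y x := fun y hy hne h =>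
          hcross y ⟨hy, hne⟩ h.symm
        exact Or.inl <| eq_of_chordCross_diagonal_right hap' hpq' hqb'
          (hside _ hap (by grind)) (hside _ hpq (by grind)) (hside _ hqb (by grind))
          (hside _ hab (by grind)) hxpb
      · refine Or.inr ⟨mem_iff.2 ⟨hx, fun y hy h => ?_⟩, ?_⟩
        · by_cases hy' : y = (p, b)
          · exact hxpb (hy' ▸ h.symm)
          · exact hcross y ⟨hy, hy'⟩ h
        · rintro rfl
          exact hxaq (chordCross_diagonals hap' hpq' hqb').symm

theorem flipGraph_adj_flip (hap : (a, p) ∈ S) (hpq : (p, q) ∈ S) (hqb : (q, b) ∈ S)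
    (hab : (a, b) ∈ S) (hpb : (p, b) ∈ S) : (flipGraph U).Adj S (S.flip hap hpq hqb hab) := by
  have hcross : ChordCross (a, q) (p, b) :=
    chordCross_diagonals (mem_chords hap).2.2 (mem_chords hpq).2.2 (mem_chords hqb).2.2
  have haq : (a, q) ∉ S := fun h => not_chordCross h hpb hcross
  have hleft : (S \ insert (a, q) (S \ {(p, b)}) : Set (α × α)) = {(p, b)} := by
    grind [SetLike.mem_coe]
  have hright : (insert (a, q) (S \ {(p, b)}) \ S : Set (α × α)) = {(a, q)} := by
    grind [SetLike.mem_coe]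
  exact ⟨Set.encard_eq_one.2 ⟨_, hleft⟩, Set.encard_eq_one.2 ⟨_, hright⟩⟩

theorem mem_of_flipGraph_adj (h : (flipGraph U).Adj S T) (hxS : x ∈ S) (hxT : x ∉ T) (hy : y ∈ S)
    (hyx : y ≠ x) : y ∈ T := by
  by_contra hyT
  exact hyx (Set.encard_le_one_iff.1 h.1.le y x ⟨hy, hyT⟩ ⟨hxS, hxT⟩)

end Flip

section Split

/-- The triangulations of the polygon on `Icc a b` whose triangle on the side `ab` has apex `p`. -/
def apexClass (a b p : α) : Set (ChordTriangulation (Set.Icc a b)) :=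
  {S | (a, p) ∈ S ∧ (p, b) ∈ S}

/-- The boundary of the class of the apex `p` towards the class of the apex `q`, the counterpart of
`boundarySet`. -/
def apexBoundary (a b p q : α) : Set (ChordTriangulation (Set.Icc a b)) :=
  {S | S ∈ apexClass a b p ∧ ∃ T ∈ apexClass a b q, (flipGraph (Set.Icc a b)).Adj S T}

theorem exists_adj_apexClass_iff {S : ChordTriangulation (Set.Icc a b)} (hpq : p < q)
    (hS : S ∈ apexClass a b p) :
    (∃ T ∈ apexClass a b q, (flipGraph (Set.Icc a b)).Adj S T) ↔ (p, q) ∈ S ∧ (q, b) ∈ S := by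
  obtain ⟨hap, hpb⟩ := hS
  have hap' : a < p := (mem_chords hap).2.2
  constructor
  · rintro ⟨T, ⟨haqT, hqbT⟩, hadj⟩
    have hqb : q < b := (mem_chords hqbT).2.2
    have hcross : ChordCross (a, q) (p, b) := chordCross_diagonals hap' hpq hqb
    have hpbT : (p, b) ∉ T := fun h => not_chordCross haqT h hcross
    have haqS : (a, q) ∉ S := fun h => not_chordCross h hpb hcross
    have hpq_chord : (p, q) ∈ chords (Set.Icc a b) :=
      ⟨(mem_chords hap).2.1, (mem_chords haqT).2.1, hpq⟩
    refine ⟨mem_iff.2 ⟨hpq_chord, fun y hy hpqy => ?_⟩,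
      mem_of_flipGraph_adj hadj.symm haqT haqS hqbT (by grind)⟩
    rcases chordCross_diagonal_of_chordCross hap' hqb (mem_chords hy) hpqy with hpby | haqy
    · exact not_chordCross hpb hy hpby
    · have hypb : y = (p, b) := by
        by_contra hne
        exact not_chordCross haqT (mem_of_flipGraph_adj hadj hpb hpbT hy hne) haqy
      grind [ChordCross]
  · rintro ⟨hpqS, hqbS⟩
    have hab : (a, b) ∈ S := S.endpoints_mem (hap'.trans (mem_chords hpb).2.2)
    refine ⟨S.flip hap hpqS hqbS hab, ⟨Or.inl rfl, Or.inr ⟨hqbS, ?_⟩⟩,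
      flipGraph_adj_flip hap hpqS hqbS hab hpb⟩
    exact fun h => hpq.ne' (Prod.mk.inj h).1

/-- The part of a triangulation inside the subpolygon cut off by its edge `cd`. -/
def restrict (S : ChordTriangulation (Set.Icc a b)) (h : (c, d) ∈ S) :
    ChordTriangulation (Set.Icc c d) where
  carrier := S ∩ chords (Set.Icc c d)
  mem_carrier_iff' x := by
    have hsub : chords (Set.Icc c d) ⊆ chords (Set.Icc a b) := by
      obtain ⟨hc, hd, -⟩ := mem_chords h
      exact fun x hx => ⟨⟨hc.1.trans hx.1.1, hx.1.2.trans hd.2⟩,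
        ⟨hc.1.trans hx.2.1.1, hx.2.1.2.trans hd.2⟩, hx.2.2⟩
    refine ⟨fun hx => ⟨hx.2, fun y hy => not_chordCross hx.1 hy.1⟩, fun ⟨hx, hcross⟩ => ?_⟩
    refine ⟨mem_iff.2 ⟨hsub hx, fun y hy hxy => hcross y ⟨hy, ?_⟩ hxy⟩, hx⟩
    exact mem_chords_Icc_of_chordCross hx (mem_chords hy).2.2 hxy (not_chordCross h hy)

theorem mem_restrict {S : ChordTriangulation (Set.Icc a b)} {h : (c, d) ∈ S} :
    x ∈ S.restrict h ↔ x ∈ S ∧ x ∈ chords (Set.Icc c d) :=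
  Iff.rfl

theorem mem_restrict_iff_of_le {S : ChordTriangulation (Set.Icc a b)} {h : (c, d) ∈ S} {i j : α}
    (hi : c ≤ i) (hj : j ≤ d) : (i, j) ∈ S.restrict h ↔ (i, j) ∈ S :=
  and_iff_left_of_imp fun hij => by grind [(mem_chords hij).2.2, chords]

theorem mem_iff_of_mem_apexClass {S : ChordTriangulation (Set.Icc a b)}
    (hS : S ∈ apexClass a b p) :
    x ∈ S ↔ x = (a, b) ∨ x ∈ S.restrict hS.1 ∨ x ∈ S.restrict hS.2 := by
  constructor
  · intro hx
    rcases mem_chords_Icc_split (mem_chords hx) (not_chordCross hx hS.1) (not_chordCross hx hS.2)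
      with hl | hr | rfl
    · exact Or.inr (Or.inl ⟨hx, hl⟩)
    · exact Or.inr (Or.inr ⟨hx, hr⟩)
    · exact Or.inl rfl
  · rintro (rfl | hx | hx)
    · exact S.endpoints_mem ((mem_chords hS.1).2.2.trans (mem_chords hS.2).2.2)
    · exact hx.1
    · exact hx.1

theorem not_chordCross_of_mem_union {A : ChordTriangulation (Set.Icc a p)}
    {B : ChordTriangulation (Set.Icc p b)} (hx : x ∈ (A ∪ B : Set (α × α)))
    (hy : y ∈ (A ∪ B : Set (α × α))) : ¬ ChordCross x y := by
  rcases hx with hx | hx <;> rcases hy with hy | hy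
  · exact not_chordCross hx hy
  · exact not_chordCross_of_split (mem_chords hx) (mem_chords hy)
  · exact fun h => not_chordCross_of_split (mem_chords hy) (mem_chords hx) h.symm
  · exact not_chordCross hx hy

/-- The triangulation obtained by gluing triangulations of the polygons on `Icc a p` and `Icc p b`
to the sides `ap` and `pb` of the triangle `apb`. -/
def glue (hap : a < p) (hpb : p < b) (A : ChordTriangulation (Set.Icc a p))
    (B : ChordTriangulation (Set.Icc p b)) : ChordTriangulation (Set.Icc a b) where
  carrier := insert (a, b) (A ∪ B)
  mem_carrier_iff' x := by
    have hchords : ∀ y ∈ (A ∪ B : Set (α × α)), y ∈ chords (Set.Icc a b) := by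
      rintro y (hy | hy)
      · exact chords_mono (Set.Icc_subset_Icc_right hpb.le) (mem_chords hy)
      · exact chords_mono (Set.Icc_subset_Icc_left hap.le) (mem_chords hy)
    have hends : ∀ y ∈ (A ∪ B : Set (α × α)), ¬ ChordCross (a, b) y := fun y hy =>
      not_chordCross_endpoints (hchords y hy)
    rw [Set.forall_mem_insert]
    constructor
    · rintro (rfl | hx)
      · have hab : a < b := hap.trans hpb
        exact ⟨⟨Set.left_mem_Icc.2 hab.le, Set.right_mem_Icc.2 hab.le, hab⟩,
          not_chordCross_self, hends⟩
      · exact ⟨hchords x hx, fun h => hends x hx h.symm,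
          fun y hy => not_chordCross_of_mem_union hx hy⟩
    · rintro ⟨hx, -, hcross⟩
      rcases mem_chords_Icc_split hx (hcross _ (Or.inl (A.endpoints_mem hap)))
        (hcross _ (Or.inr (B.endpoints_mem hpb))) with hl | hr | rfl
      · exact Or.inr (Or.inl (mem_iff.2 ⟨hl, fun y hy => hcross y (Or.inl hy)⟩))
      · exact Or.inr (Or.inr (mem_iff.2 ⟨hr, fun y hy => hcross y (Or.inr hy)⟩))
      · exact Or.inl rfl

theorem mem_glue {hap : a < p} {hpb : p < b} {A : ChordTriangulation (Set.Icc a p)}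
    {B : ChordTriangulation (Set.Icc p b)} : x ∈ glue hap hpb A B ↔ x = (a, b) ∨ x ∈ A ∨ x ∈ B :=
  Iff.rfl

theorem glue_mem_apexClass (hap : a < p) (hpb : p < b) (A : ChordTriangulation (Set.Icc a p))
    (B : ChordTriangulation (Set.Icc p b)) : glue hap hpb A B ∈ apexClass a b p :=
  ⟨mem_glue.2 (Or.inr (Or.inl (A.endpoints_mem hap))),
    mem_glue.2 (Or.inr (Or.inr (B.endpoints_mem hpb)))⟩

theorem glue_restrict {S : ChordTriangulation (Set.Icc a b)} (hap : a < p) (hpb : p < b)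
    (hS : S ∈ apexClass a b p) : glue hap hpb (S.restrict hS.1) (S.restrict hS.2) = S :=
  SetLike.ext fun _ => mem_glue.trans (mem_iff_of_mem_apexClass hS).symm

theorem restrict_glue_left (hap : a < p) (hpb : p < b) (A : ChordTriangulation (Set.Icc a p))
    (B : ChordTriangulation (Set.Icc p b)) :
    (glue hap hpb A B).restrict (glue_mem_apexClass hap hpb A B).1 = A :=
  Eq.symm <| eq_of_subset fun _ hx =>
    mem_restrict.2 ⟨mem_glue.2 (Or.inr (Or.inl hx)), mem_chords hx⟩

theorem restrict_glue_right (hap : a < p) (hpb : p < b) (A : ChordTriangulation (Set.Icc a p))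
    (B : ChordTriangulation (Set.Icc p b)) :
    (glue hap hpb A B).restrict (glue_mem_apexClass hap hpb A B).2 = B :=
  Eq.symm <| eq_of_subset fun _ hx =>
    mem_restrict.2 ⟨mem_glue.2 (Or.inr (Or.inr hx)), mem_chords hx⟩

theorem encard_sdiff_eq_add {S T : ChordTriangulation (Set.Icc a b)} (hS : S ∈ apexClass a b p)
    (hT : T ∈ apexClass a b p) :
    (S \ T : Set (α × α)).encard =
      (S.restrict hS.1 \ T.restrict hT.1 : Set (α × α)).encard +
        (S.restrict hS.2 \ T.restrict hT.2 : Set (α × α)).encard := by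
  rw [← Set.encard_union_eq]
  · congr 1
    ext x
    have hmem := mem_iff_of_mem_apexClass (x := x) hS
    have hab := (mem_iff_of_mem_apexClass (x := x) hT).2
    simp only [Set.mem_union, Set.mem_sdiff, SetLike.mem_coe, mem_restrict] at *
    tauto
  · exact disjoint_chords_Icc.mono (fun x hx => mem_chords hx.1) fun x hx => mem_chords hx.1

theorem boxProd_adj_restrict_iff {S T : ChordTriangulation (Set.Icc a b)}
    (hS : S ∈ apexClass a b p) (hT : T ∈ apexClass a b p) :
    ((flipGraph (Set.Icc a p)).boxProd (flipGraph (Set.Icc p b))).Adj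
      (S.restrict hS.1, S.restrict hS.2) (T.restrict hT.1, T.restrict hT.2) ↔
      (flipGraph (Set.Icc a b)).Adj S T := by
  have encard_sdiff_self {W : Set α} (R : ChordTriangulation W) :
      (R \ R : Set (α × α)).encard ≠ 1 := by simp
  simp only [SimpleGraph.boxProd_adj, flipGraph_adj, encard_sdiff_eq_add hS hT,
    encard_sdiff_eq_add hT hS, enat_add_eq_one_iff, encard_sdiff_eq_zero_iff]
  grind

/-- A triangulation in which the triangle on the side `ab` has apex `p` is a pair of triangulations
of the polygons on either side of that triangle. -/
def apexClassIso (hap : a < p) (hpb : p < b) :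
    (flipGraph (Set.Icc a b)).induce (apexClass a b p) ≃g
      (flipGraph (Set.Icc a p)).boxProd (flipGraph (Set.Icc p b)) where
  toFun S := (S.1.restrict S.2.1, S.1.restrict S.2.2)
  invFun A := ⟨glue hap hpb A.1 A.2, glue_mem_apexClass hap hpb A.1 A.2⟩
  left_inv S := Subtype.ext (glue_restrict hap hpb S.2)
  right_inv A := Prod.ext (restrict_glue_left hap hpb A.1 A.2)
    (restrict_glue_right hap hpb A.1 A.2)
  map_rel_iff' {S T} := boxProd_adj_restrict_iff S.2 T.2

theorem mem_apexBoundary_iff {S : ChordTriangulation (Set.Icc a b)} (hpq : p < q) :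
    S ∈ apexBoundary a b p q ↔ S ∈ apexClass a b p ∧ (p, q) ∈ S ∧ (q, b) ∈ S :=
  and_congr_right fun hS => exists_adj_apexClass_iff hpq hS

theorem mem_apexBoundary_iff_restrict {S : ChordTriangulation (Set.Icc a b)} (hpq : p < q)
    (hqb : q ≤ b) : S ∈ apexBoundary a b p q ↔
      ∃ hS : S ∈ apexClass a b p, S.restrict hS.2 ∈ apexClass p b q := by
  rw [mem_apexBoundary_iff hpq, ← exists_prop]
  exact exists_congr fun hS => and_congr (mem_restrict_iff_of_le le_rfl hqb).symm
    (mem_restrict_iff_of_le hpq.le le_rfl).symm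

/-- In the splitting `apexClassIso`, the boundary towards the apex `q` consists of the pairs whose
second component lies in the class of the apex `q`. -/
def apexBoundaryIso (hap : a < p) (hpq : p < q) (hqb : q < b) :
    (flipGraph (Set.Icc a b)).induce (apexBoundary a b p q) ≃g
      (flipGraph (Set.Icc a p)).boxProd ((flipGraph (Set.Icc p b)).induce (apexClass p b q)) :=
  (SimpleGraph.Iso.refl.induce <| (Equiv.refl _).bijOn fun _ =>
      (mem_apexBoundary_iff_restrict hpq hqb.le).symm).trans <|
    induceIsoBoxProdInduce (apexClassIso hap (hpq.trans hqb)) (apexClass p b q)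

end Split

end ChordTriangulation

end Chords

section Polygon

variable {m : ℕ} {a b c d x : Fin m} {e f : Sym2 (Fin m)}

theorem cycBtw_iff_of_lt (h : a < b) : CycBtw a b x ↔ a < x ∧ x < b := by
  rw [CycBtw, Fin.sub_val_of_le h.le]
  rcases le_or_gt a x with hx | hx
  · rw [Fin.sub_val_of_le hx]
    omega
  · rw [Fin.coe_sub_iff_lt.2 hx]
    omega

theorem cycBtw_iff_of_gt (h : b < a) : CycBtw a b x ↔ a < x ∨ x < b := by
  rw [CycBtw, Fin.coe_sub_iff_lt.2 h]
  rcases le_or_gt a x with hx | hx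
  · rw [Fin.sub_val_of_le hx]
    omega
  · rw [Fin.coe_sub_iff_lt.2 hx]
    omega

theorem crosses_mk_iff : Crosses s(a, b) s(c, d) ↔
    Xor (CycBtw a b c) (CycBtw a b d) ∧ Xor (CycBtw b a c) (CycBtw b a d) := by
  have exists_rep_iff (a b : Fin m) :
      (∃ c' d', s(c, d) = s(c', d') ∧ Xor (CycBtw a b c') (CycBtw a b d')) ↔
        Xor (CycBtw a b c) (CycBtw a b d) := by
    grind [Sym2.eq_iff]
  constructor
  · exact fun h => ⟨(exists_rep_iff a b).1 (h a b rfl), (exists_rep_iff b a).1 (h b a Sym2.eq_swap)⟩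
  · rintro ⟨hab, hba⟩ a' b' h
    rcases Sym2.eq_iff.1 h with ⟨rfl, rfl⟩ | ⟨rfl, rfl⟩
    · exact (exists_rep_iff a b).2 hab
    · exact (exists_rep_iff b a).2 hba

theorem crosses_iff_chordCross (hab : a < b) (hcd : c < d) :
    Crosses s(a, b) s(c, d) ↔ ChordCross (a, b) (c, d) := by
  rw [crosses_mk_iff, cycBtw_iff_of_lt hab, cycBtw_iff_of_lt hab, cycBtw_iff_of_gt hab,
    cycBtw_iff_of_gt hab]
  grind [ChordCross]

theorem IsSide.not_crosses (he : IsSide e) : ¬ Crosses e f := by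
  have not_cycBtw {a b x : Fin m} (hab : (b - a).val = 1) : ¬ CycBtw a b x := by
    unfold CycBtw
    omega
  obtain ⟨a, b, rfl, hab | hba⟩ := he
  · intro h
    obtain ⟨c, d, -, hcd⟩ := h a b rfl
    exact (Xor.or hcd).elim (not_cycBtw hab) (not_cycBtw hab)
  · intro h
    obtain ⟨c, d, -, hcd⟩ := h b a Sym2.eq_swap
    exact (Xor.or hcd).elim (not_cycBtw hba) (not_cycBtw hba)

theorem isDiagonal_iff : IsDiagonal e ↔ ¬ e.IsDiag ∧ ¬ IsSide e := by
  simp only [IsDiagonal, IsSide, not_exists, not_and]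

theorem exists_lt_of_not_isDiag (he : ¬ e.IsDiag) : ∃ a b, a < b ∧ e = s(a, b) := by
  induction e with
  | h a b =>
    rcases lt_or_gt_of_ne (Sym2.mk_isDiag_iff.not.1 he) with h | h
    · exact ⟨a, b, h, rfl⟩
    · exact ⟨b, a, h, Sym2.eq_swap⟩

end Polygon

namespace Triangulation

open ChordTriangulation

variable {n : ℕ} {i j : Fin (n + 2)} {x y : Fin (n + 2) × Fin (n + 2)}

theorem not_chordCross_of_edgeOfT {t : Triangulation n} (hx : x.1 < x.2) (hy : y.1 < y.2)
    (hxt : EdgeOfT t s(x.1, x.2)) (hyt : EdgeOfT t s(y.1, y.2)) : ¬ ChordCross x y := by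
  rcases hxt with hxt | hxt
  · exact (crosses_iff_chordCross hx hy).not.1 hxt.not_crosses
  rcases hyt with hyt | hyt
  · exact fun h => (crosses_iff_chordCross hy hx).not.1 hyt.not_crosses h.symm
  · exact (crosses_iff_chordCross hx hy).not.1 (t.2.2.1 _ hxt _ hyt)

/-- The triangulation with the same edges as `t`, with the vertices of the polygon in linear order
instead of cyclic order. -/
def toChords (t : Triangulation n) : ChordTriangulation (Set.univ : Set (Fin (n + 2))) where
  carrier := {x | x.1 < x.2 ∧ EdgeOfT t s(x.1, x.2)}
  mem_carrier_iff' x := by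
    constructor
    · rintro ⟨hx, hxt⟩
      exact ⟨⟨trivial, trivial, hx⟩, fun y hy => not_chordCross_of_edgeOfT hx hy.1 hxt hy.2⟩
    · rintro ⟨⟨-, -, hx⟩, hcross⟩
      refine ⟨hx, or_iff_not_imp_left.2 fun hside => t.2.2.2 _ ?_ fun f hf => ?_⟩
      · exact isDiagonal_iff.2 ⟨Sym2.mk_isDiag_iff.not.2 hx.ne, hside⟩
      · obtain ⟨c, d, hcd, rfl⟩ := exists_lt_of_not_isDiag (t.2.1 f hf).1
        exact (crosses_iff_chordCross hx hcd).not.2 (hcross (c, d) ⟨hcd, Or.inr hf⟩)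

theorem mem_toChords {t : Triangulation n} (hij : i < j) :
    (i, j) ∈ t.toChords ↔ EdgeOfT t s(i, j) :=
  and_iff_right hij

open Classical in
/-- The triangulation with the same edges as `S`: the inverse of `Triangulation.toChords`. -/
noncomputable def ofChords (S : ChordTriangulation (Set.univ : Set (Fin (n + 2)))) :
    Triangulation n where
  val := {e | IsDiagonal e ∧ ∃ x ∈ S, s(x.1, x.2) = e}
  property := by
    simp only [IsTriangulation, mem_filter_univ]
    refine ⟨fun e he => he.1, ?_, fun e he hcross => ⟨he, ?_⟩⟩
    · rintro _ ⟨-, x, hx, rfl⟩ _ ⟨-, y, hy, rfl⟩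
      exact (crosses_iff_chordCross (mem_chords hx).2.2
        (mem_chords hy).2.2).not.2 (not_chordCross hx hy)
    · obtain ⟨a, b, hab, rfl⟩ := exists_lt_of_not_isDiag he.1
      refine ⟨(a, b), mem_iff.2 ⟨⟨trivial, trivial, hab⟩, fun y hy h => ?_⟩, rfl⟩
      have hy' : y.1 < y.2 := (mem_chords hy).2.2
      by_cases hside : IsSide s(y.1, y.2)
      · exact (crosses_iff_chordCross hy' hab).not.1 hside.not_crosses h.symm
      · exact (crosses_iff_chordCross hab hy').not.1 (hcross _
          ⟨isDiagonal_iff.2 ⟨Sym2.mk_isDiag_iff.not.2 hy'.ne, hside⟩, y, hy, rfl⟩) h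

theorem mem_ofChords {S : ChordTriangulation (Set.univ : Set (Fin (n + 2)))} (hij : i < j) :
    s(i, j) ∈ (ofChords S).val ↔ IsDiagonal s(i, j) ∧ (i, j) ∈ S := by
  simp only [ofChords, mem_filter_univ]
  refine and_congr_right fun _ => ⟨?_, fun h => ⟨_, h, rfl⟩⟩
  rintro ⟨x, hx, h⟩
  have hx' : x.1 < x.2 := (mem_chords hx).2.2
  rcases Sym2.eq_iff.1 h with ⟨rfl, rfl⟩ | ⟨rfl, rfl⟩
  · exact hx
  · exact absurd hij hx'.asymm

theorem encard_toChords_sdiff (s t : Triangulation n) :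
    (s.toChords \ t.toChords : Set (Fin (n + 2) × Fin (n + 2))).encard = (s.val \ t.val).card := by
  have hinj : Set.InjOn (fun x : Fin (n + 2) × Fin (n + 2) => s(x.1, x.2))
      (s.toChords \ t.toChords) := by
    rintro x ⟨⟨hx, -⟩, -⟩ y ⟨⟨hy, -⟩, -⟩ h
    grind [Sym2.eq_iff]
  rw [← hinj.encard_image, ← Set.encard_coe_eq_coe_finsetCard]
  congr 1
  ext e
  simp only [coe_sdiff]
  constructor
  · rintro ⟨⟨i, j⟩, ⟨⟨hij, hs⟩, ht⟩, rfl⟩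
    have ht : ¬ EdgeOfT t s(i, j) := (mem_toChords hij).not.1 ht
    exact ⟨hs.resolve_left (not_or.1 ht).1, (not_or.1 ht).2⟩
  · rintro ⟨hs, ht⟩
    have he := isDiagonal_iff.1 (s.2.1 e hs)
    obtain ⟨i, j, hij, rfl⟩ := exists_lt_of_not_isDiag he.1
    exact ⟨(i, j), ⟨⟨hij, Or.inr hs⟩, fun h => h.2.elim he.2 ht⟩, rfl⟩

theorem flipGraph_adj_toChords_iff {s t : Triangulation n} :
    (flipGraph Set.univ).Adj s.toChords t.toChords ↔ (assocGraph n).Adj s t := by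
  rw [flipGraph_adj, encard_toChords_sdiff, encard_toChords_sdiff, Nat.cast_eq_one,
    Nat.cast_eq_one]
  rfl

/-- `assocGraph n` is the flip graph of the polygon with vertices `0 < 1 < ⋯ < n + 1`. -/
noncomputable def toChordsIso (n : ℕ) :
    assocGraph n ≃g flipGraph (Set.univ : Set (Fin (n + 2))) where
  toFun := toChords
  invFun := ofChords
  left_inv t := by
    have mem_iff_of_isDiagonal {e} (he : IsDiagonal e) :
        e ∈ (ofChords t.toChords).val ↔ e ∈ t.val := by
      obtain ⟨i, j, hij, rfl⟩ := exists_lt_of_not_isDiag he.1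
      rw [mem_ofChords hij, mem_toChords hij, EdgeOfT, or_iff_right (isDiagonal_iff.1 he).2,
        and_iff_right he]
    refine Subtype.ext (Finset.ext fun e => ⟨fun he => ?_, fun he => ?_⟩)
    · exact (mem_iff_of_isDiagonal ((ofChords t.toChords).2.1 e he)).1 he
    · exact (mem_iff_of_isDiagonal (t.2.1 e he)).2 he
  right_inv S := Eq.symm <| eq_of_subset fun x hx => by
    have hlt : x.1 < x.2 := (mem_chords hx).2.2
    refine (mem_toChords hlt).2 (or_iff_not_imp_left.2 fun hside => (mem_ofChords hlt).2 ⟨?_, hx⟩)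
    exact isDiagonal_iff.2 ⟨Sym2.mk_isDiag_iff.not.2 hlt.ne, hside⟩
  map_rel_iff' := flipGraph_adj_toChords_iff

variable {lo hi a b c p q : ℕ}

theorem image_univ_eq_Icc (h : hi = lo + n + 1) :
    (Fin.valOrderEmb (n + 2)).trans (OrderEmbedding.addLeft lo) '' Set.univ = Set.Icc lo hi := by
  ext k
  constructor
  · rintro ⟨i, -, rfl⟩
    have hi : lo + i.val ≤ hi := by omega
    exact ⟨Nat.le_add_right lo i, hi⟩
  · rintro ⟨hlo, hhi⟩
    exact ⟨⟨k - lo, by omega⟩, trivial, Nat.add_sub_of_le hlo⟩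

/-- `assocGraph n` is the flip graph of any polygon with vertices `lo, lo + 1, …, hi = lo + n + 1`:
the vertex `i` of the standard polygon is relabelled `lo + i`. -/
noncomputable def assocGraphIsoIcc (h : hi = lo + n + 1) :
    assocGraph n ≃g flipGraph (Set.Icc lo hi) :=
  (toChordsIso n).trans (flipGraphMapIso _ (image_univ_eq_Icc h))

theorem natCast_sub_lt_natCast_sub (h : hi = lo + n + 1) (ha : lo ≤ a)
    (hab : a < b) (hb : b ≤ hi) : ((a - lo : ℕ) : Fin (n + 2)) < ((b - lo : ℕ) : Fin (n + 2)) := by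
  rw [Fin.lt_def, Fin.val_cast_of_lt, Fin.val_cast_of_lt] <;> omega

theorem mem_assocGraphIsoIcc_iff (h : hi = lo + n + 1) (t : Triangulation n)
    (ha : lo ≤ a) (hab : a < b) (hb : b ≤ hi) :
    (a, b) ∈ assocGraphIsoIcc h t ↔
      EdgeOfT t s(((a - lo : ℕ) : Fin (n + 2)), ((b - lo : ℕ) : Fin (n + 2))) := by
  have val_cast {k : ℕ} (hk : k ≤ hi) : ((k - lo : ℕ) : Fin (n + 2)).val = k - lo :=
    Fin.val_cast_of_lt (by omega)
  have hlt : ((a - lo : ℕ) : Fin (n + 2)) < ((b - lo : ℕ) : Fin (n + 2)) :=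
    natCast_sub_lt_natCast_sub h ha hab hb
  have hmem := mem_flipGraphMapIso_iff (S := toChordsIso n t) _ (image_univ_eq_Icc h)
    (i := ((a - lo : ℕ) : Fin (n + 2))) (j := ((b - lo : ℕ) : Fin (n + 2)))
  simp only [RelEmbedding.coe_trans, Function.comp_apply, Fin.valOrderEmb_apply,
    OrderEmbedding.addLeft_apply, val_cast (hab.le.trans hb), val_cast hb, Nat.add_sub_of_le ha,
    Nat.add_sub_of_le (ha.trans hab.le)] at hmem
  exact hmem.trans (mem_toChords hlt)

theorem isTriangleOf_iff (h : hi = lo + n + 1) (t : Triangulation n)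
    (ha : lo ≤ a) (hab : a < b) (hbc : b < c) (hc : c ≤ hi) :
    IsTriangleOf t ((a - lo : ℕ) : Fin (n + 2)) ((b - lo : ℕ) : Fin (n + 2))
      ((c - lo : ℕ) : Fin (n + 2)) ↔
      (a, b) ∈ assocGraphIsoIcc h t ∧ (b, c) ∈ assocGraphIsoIcc h t ∧
        (a, c) ∈ assocGraphIsoIcc h t := by
  rw [mem_assocGraphIsoIcc_iff h t ha hab (hbc.le.trans hc),
    mem_assocGraphIsoIcc_iff h t (ha.trans hab.le) hbc hc,
    mem_assocGraphIsoIcc_iff h t ha (hab.trans hbc) hc, IsTriangleOf,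
    and_iff_right (natCast_sub_lt_natCast_sub h ha hab (hbc.le.trans hc)).ne,
    and_iff_right (natCast_sub_lt_natCast_sub h (ha.trans hab.le) hbc hc).ne,
    and_iff_right (natCast_sub_lt_natCast_sub h ha (hab.trans hbc) hc).ne]

theorem assocGraphIsoIcc_mem_apexClass_iff (h : hi = lo + n + 1)
    (t : Triangulation n) (hlo : lo < p) (hhi : p < hi) :
    assocGraphIsoIcc h t ∈ apexClass lo hi p ↔ t ∈ orientedClass n (p - lo) := by
  have htriangle := isTriangleOf_iff h t le_rfl hlo hhi le_rfl
  rw [Nat.sub_self, Nat.cast_zero, show hi - lo = n + 1 by omega] at htriangle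
  have hbase : (lo, hi) ∈ assocGraphIsoIcc h t := endpoints_mem _ (hlo.trans hhi)
  refine Iff.trans ?_ htriangle.symm
  rw [and_iff_left hbase]
  rfl

theorem assocGraphIsoIcc_mem_apexBoundary_iff (h : hi = lo + n + 1)
    (t : Triangulation n) (hlo : lo < p) (hpq : p < q) (hhi : q < hi) :
    assocGraphIsoIcc h t ∈ apexBoundary lo hi p q ↔ t ∈ boundarySet n (p - lo) (q - lo) := by
  refine and_congr (assocGraphIsoIcc_mem_apexClass_iff h t hlo (hpq.trans hhi)) ?_
  rw [(assocGraphIsoIcc h).surjective.exists]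
  exact exists_congr fun t' => and_congr
    (assocGraphIsoIcc_mem_apexClass_iff h t' (hlo.trans hpq) hhi) (assocGraphIsoIcc h).map_adj_iff

end Triangulation

open ChordTriangulation Triangulation

/-- for every `n ≥ 2` and `1 ≤ p < q ≤ n`, the boundary set `∂_{p,q}` is
exactly the set of triangulations in `Θ_{T_p}` containing the triangle `{p, q, n+1}`,
and the subgraph of `K_n` induced by `∂_{p,q}` is isomorphic to `K_{p-1} □ Θ'`, where
`Θ'` is the oriented class of the triangle `{0, q-p, (n-p)+1}` inside the flip graph
`K_{n-p}` of the convex `(n-p+2)`-gon (the relabeling of the polygon on vertices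
`p, …, n+1` with special side `{p, n+1}`), viewed as the induced subgraph on that
class. -/
theorem boundarySet_eq_and_isomorphic (n p q : ℕ) (hn : 2 ≤ n) (hp : 1 ≤ p)
    (hpq : p < q) (hqn : q ≤ n) :
    boundarySet n p q =
      {t : Triangulation n | t ∈ orientedClass n p ∧
        IsTriangleOf t ((p : ℕ) : Fin (n + 2)) ((q : ℕ) : Fin (n + 2))
          (((n + 1 : ℕ)) : Fin (n + 2))} ∧
    Nonempty (((assocGraph n).induce (boundarySet n p q)) ≃g
      (assocGraph (p - 1)).boxProd
        ((assocGraph (n - p)).induce (orientedClass (n - p) (q - p)))) := by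
  have h₀ : n + 1 = 0 + n + 1 := by omega
  have hₗ : p = 0 + (p - 1) + 1 := by omega
  have hᵣ : n + 1 = p + (n - p) + 1 := by omega
  have hqn' : q < n + 1 := Nat.lt_succ_of_le hqn
  have hboundary (t : Triangulation n) := assocGraphIsoIcc_mem_apexBoundary_iff h₀ t hp hpq hqn'
  constructor
  · ext t
    refine (hboundary t).symm.trans <| (mem_apexBoundary_iff hpq).trans <| Iff.trans ?_ <|
      and_congr (assocGraphIsoIcc_mem_apexClass_iff h₀ t hp (hpq.trans hqn'))
        (isTriangleOf_iff h₀ t (Nat.zero_le p) hpq hqn' le_rfl).symm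
    exact and_congr_right fun ht => and_congr_right fun _ => (and_iff_left ht.2).symm
  · refine ⟨((assocGraphIsoIcc h₀).induce (Equiv.bijOn _ hboundary)).trans <|
      (apexBoundaryIso hp hpq hqn').trans <| boxProdIso (assocGraphIsoIcc hₗ).symm
        ((assocGraphIsoIcc hᵣ).induce (Equiv.bijOn _ fun t => ?_)).symm⟩
    exact assocGraphIsoIcc_mem_apexClass_iff hᵣ t hpq hqn'
end
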